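/- Frobenius character formula for Schur–Weyl duality: for any partition τ of k and variables x_1,...,x_d, p_τ(x) = Σ_{λ ⊢ k, ℓ(λ) ≤ d} χ_λ(τ) s_λ(x), where p_τ is the power-sum polynomial indexed by τ, χ_λ(τ) the value of the irreducible S_k character χ_λ on the conjugacy class of cycle type τ, and s_λ the Schur polynomial. -/

import Mathlib

open Finset Nat

noncomputable section

/-- The cells of the Young diagram of `lam` (row and column indices below `k`). -/
def youngCells (k : ℕ) (lam : ℕ → ℕ) : Finset (ℕ × ℕ) :=
  (range k ×ˢ range k).filter fun c => c.2 < lam c.1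

/-- `lam` is a partition of `k`: a weakly decreasing sequence of naturals summing to `k`
(supported on the first `k` entries). -/
def IsPartitionOf (k : ℕ) (lam : ℕ → ℕ) : Prop :=
  Antitone lam ∧ (∀ i, k ≤ i → lam i = 0) ∧ ∑ i ∈ range k, lam i = k

/-- The Young symmetry operator `e(T)` in the group algebra `ℂ[S_k]`, for a tableau given by
a numbering `t : Fin k → ℕ × ℕ` of the boxes: the signed sum over the column group times the
sum over the row group. -/
def youngSym (k : ℕ) (t : Fin k → ℕ × ℕ) : MonoidAlgebra ℂ (Equiv.Perm (Fin k)) :=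
  (∑ π ∈ univ.filter (fun π : Equiv.Perm (Fin k) => ∀ j, (t (π j)).2 = (t j).2),
      MonoidAlgebra.single π ((Equiv.Perm.sign π : ℤ) : ℂ)) *
    ∑ π ∈ univ.filter (fun π : Equiv.Perm (Fin k) => ∀ j, (t (π j)).1 = (t j).1),
      MonoidAlgebra.single π (1 : ℂ)

/-- The left ideal `ℂ[S_k]·e(T)` generated by the Young symmetry operator of the tableau `t`;
it carries the irreducible representation `U_lam` of `S_k` for `lam` the shape of `t`. -/
def youngIdeal (k : ℕ) (t : Fin k → ℕ × ℕ) :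
    Submodule ℂ (MonoidAlgebra ℂ (Equiv.Perm (Fin k))) :=
  LinearMap.range (LinearMap.mulRight ℂ (youngSym k t))

/-- The value at `π` of the character of the representation of `S_k` on the left ideal
`ℂ[S_k]·e(T)`, i.e. the trace of left multiplication by `π` on this ideal.  For `t` a
tableau of shape `lam ⊢ k` this is the irreducible character `χ_lam(π)`. -/
def youngIdealChar (k : ℕ) (t : Fin k → ℕ × ℕ) (π : Equiv.Perm (Fin k)) : ℂ :=
  LinearMap.trace ℂ (youngIdeal k t)
    ((LinearMap.mulLeft ℂ (MonoidAlgebra.single π (1 : ℂ))).restrict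
      (fun x hx => by
        obtain ⟨a, rfl⟩ := hx
        exact ⟨MonoidAlgebra.single π (1 : ℂ) * a, by
          simp only [LinearMap.mulRight_apply, LinearMap.mulLeft_apply, mul_assoc]⟩))

/-- `chi` is the family of irreducible characters of the symmetric groups: `chi k lam` is the
character of the irreducible representation of `S_k` indexed by the partition `lam ⊢ k`,
realised on the left ideal generated by the Young symmetry operator of any tableau of
shape `lam`. -/
def IsCharacterFamily (chi : (k : ℕ) → (ℕ → ℕ) → Equiv.Perm (Fin k) → ℂ) : Prop :=
  ∀ (k : ℕ) (lam : ℕ → ℕ), IsPartitionOf k lam →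
    ∀ t : Fin k → ℕ × ℕ, Set.BijOn t Set.univ ↑(youngCells k lam) →
      ∀ π, chi k lam π = youngIdealChar k t π

/-- `g` is the family of Kronecker coefficients associated to the character family `chi`:
`g k lam mu nu` is the multiplicity of `U_lam` in `U_mu ⊗ U_nu`, given by
`(1/k!) Σ_{π ∈ S_k} χ_lam(π) χ_mu(π) χ_nu(π)`. -/
def IsKroneckerFamily (chi : (k : ℕ) → (ℕ → ℕ) → Equiv.Perm (Fin k) → ℂ)
    (g : (k : ℕ) → (ℕ → ℕ) → (ℕ → ℕ) → (ℕ → ℕ) → ℕ) : Prop :=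
  ∀ (k : ℕ) (lam mu nu : ℕ → ℕ), IsPartitionOf k lam → IsPartitionOf k mu →
    IsPartitionOf k nu →
      (g k lam mu nu : ℂ) = (k ! : ℂ)⁻¹ * ∑ π : Equiv.Perm (Fin k),
        chi k lam π * chi k mu π * chi k nu π

section PowerSum
open Equiv Equiv.Perm

/-- Index of the orbits of a permutation. -/
abbrev OrbIx {α : Type*} [Fintype α] [DecidableEq α] (π : Perm α) : Type _ :=
  {c // c ∈ π.cycleFactorsFinset} ⊕ {x // π x = x}

def orbKey {α : Type*} [Fintype α] [DecidableEq α] (π : Perm α) (x : α) : OrbIx π :=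
  if h : π x = x then Sum.inr ⟨x, h⟩
  else Sum.inl ⟨π.cycleOf x, by
    rw [cycleOf_mem_cycleFactorsFinset_iff, mem_support]; exact h⟩

lemma orbKey_inr_iff {α : Type*} [Fintype α] [DecidableEq α] (π : Perm α) (x : α)
    (y : {x // π x = x}) : orbKey π x = Sum.inr y ↔ x = y := by
  unfold orbKey
  split_ifs with h
  · simp [Subtype.ext_iff]
  · simp only [false_iff]
    rintro rfl
    exact h y.2

lemma orbKey_inl_iff {α : Type*} [Fintype α] [DecidableEq α] (π : Perm α) (x : α)
    (c : {c // c ∈ π.cycleFactorsFinset}) :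
    orbKey π x = Sum.inl c ↔ x ∈ (c : Perm α).support := by
  obtain ⟨c, hc⟩ := c
  unfold orbKey
  split_ifs with h
  · simp only [false_iff]
    intro hx
    have := mem_cycleFactorsFinset_support_le hc hx
    rw [mem_support] at this
    exact this h
  · simp only [Sum.inl.injEq, Subtype.mk.injEq]
    constructor
    · rintro rfl
      rw [mem_support_cycleOf_iff]
      exact ⟨SameCycle.refl _ _, by rwa [mem_support]⟩
    · intro hx
      exact (cycle_is_cycleOf hx hc).symm

lemma orbKey_surj {α : Type*} [Fintype α] [DecidableEq α] (π : Perm α) :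
    Function.Surjective (orbKey π) := by
  rintro (c | y)
  · obtain ⟨x, hx⟩ := (mem_cycleFactorsFinset_iff.1 c.2).1.nonempty_support
    exact ⟨x, (orbKey_inl_iff π x c).2 hx⟩
  · exact ⟨y, (orbKey_inr_iff π _ y).2 rfl⟩

lemma orbKey_apply {α : Type*} [Fintype α] [DecidableEq α] (π : Perm α) (x : α) :
    orbKey π (π x) = orbKey π x := by
  rcases h : orbKey π x with c | y
  · rw [orbKey_inl_iff] at h ⊢
    have h1 := (mem_cycleFactorsFinset_iff.1 c.2).2 x h
    rw [← h1]
    exact (apply_mem_support).2 h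
  · rw [orbKey_inr_iff] at h ⊢
    rw [h, y.2]

lemma orbKey_eq_imp {α : Type*} [Fintype α] [DecidableEq α] (π : Perm α) (x y : α)
    (h : orbKey π x = orbKey π y) : π.SameCycle x y := by
  rcases h' : orbKey π y with c | z
  · rw [h'] at h
    rw [orbKey_inl_iff] at h h'
    have h1 := cycle_is_cycleOf h c.2
    rw [h1, mem_support_cycleOf_iff] at h'
    exact h'.1
  · rw [h'] at h
    rw [orbKey_inr_iff] at h h'
    rw [h, h']

lemma psum_aux {R ι α : Type*} [CommRing R] [Fintype ι] [DecidableEq ι] [Fintype α]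
    [DecidableEq α] (x : ι → R) (π : Perm α) :
    ∑ f ∈ univ.filter (fun f : α → ι => f ∘ π = f), ∏ j, x (f j) =
      ∏ o : OrbIx π, ∑ i, x i ^ (univ.filter (fun j => orbKey π j = o)).card := by
  rw [Finset.prod_univ_sum, Fintype.piFinset_univ]
  symm
  refine Finset.sum_bij (fun g _ => g ∘ orbKey π) ?_ ?_ ?_ ?_
  · intro g _
    simp only [mem_filter, mem_univ, true_and]
    funext j
    simp [orbKey_apply]
  · intro g _ g' _ h
    exact (orbKey_surj π).injective_comp_right h
  · intro f hf
    simp only [mem_filter, mem_univ, true_and] at hf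
    refine ⟨f ∘ Function.surjInv (orbKey_surj π), mem_univ _, ?_⟩
    funext j
    simp only [Function.comp_apply]
    have h1 := orbKey_eq_imp π _ _ (Function.surjInv_eq (orbKey_surj π) (orbKey π j))
    generalize Function.surjInv (orbKey_surj π) (orbKey π j) = z at h1 ⊢
    obtain ⟨n, rfl⟩ := h1.exists_nat_pow_eq
    clear h1
    induction n with
    | zero => simp
    | succ n ih =>
      rw [_root_.pow_succ', Perm.mul_apply, ih]
      exact (congrFun hf _).symm
  · intro g _
    rw [← Finset.prod_fiberwise univ (orbKey π)]
    refine Finset.prod_congr rfl fun o _ => ?_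
    rw [← Finset.prod_const]
    refine Finset.prod_congr rfl fun j hj => ?_
    simp only [mem_filter, mem_univ, true_and] at hj
    simp [hj]

lemma psum_eq {R : Type*} [CommRing R] {d k : ℕ} (x : Fin d → R) (τ : Multiset ℕ)
    (hτ0 : 0 ∉ τ) (hτsum : τ.sum = k)
    (π : Perm (Fin k)) (hπ : π.cycleType = τ.filter (· ≠ 1)) :
    (τ.map fun r => ∑ i, x i ^ r).prod =
      ∑ f ∈ univ.filter (fun f : Fin k → Fin d => f ∘ π = f), ∏ j, x (f j) := by
  rw [psum_aux, Fintype.prod_sum_type]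
  have h1 : ∀ c : {c // c ∈ π.cycleFactorsFinset},
      (univ.filter (fun j => orbKey π j = Sum.inl c)) = (c : Perm (Fin k)).support := by
    intro c; ext j; simp [orbKey_inl_iff]
  have h2 : ∀ c : {x // π x = x},
      (univ.filter (fun j => orbKey π j = Sum.inr c)) = {(c : Fin k)} := by
    intro c; ext j; simp [orbKey_inr_iff]
  simp only [h1, h2, Finset.card_singleton]
  have hsplit : τ = π.cycleType + Multiset.replicate (τ.count 1) 1 := by
    rw [hπ]
    conv_lhs => rw [← Multiset.filter_add_not (fun r => r ≠ 1) τ]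
    congr 1
    simp only [ne_eq, not_not]
    rw [Multiset.filter_eq']
  have hcount : τ.count 1 = Fintype.card {x // π x = x} := by
    have h3 := congrArg Multiset.sum hsplit
    rw [Multiset.sum_add, sum_cycleType, Multiset.sum_replicate, hτsum] at h3
    have h4 : Fintype.card {x // π x = x} + π.support.card = k := by
      have : Fintype.card {x // π x = x} = (π.supportᶜ).card := by
        rw [Fintype.card_subtype]; congr 1; ext; simp
      rw [this, Finset.card_compl_add_card, Fintype.card_fin]
    simp at h3
    omega
  rw [hsplit, Multiset.map_add, Multiset.prod_add, Multiset.map_replicate,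
    Multiset.prod_replicate, hcount, Finset.prod_const, Finset.card_univ, cycleType_def,
    Multiset.map_map]
  congr 1
  exact (Finset.prod_coe_sort π.cycleFactorsFinset
    (fun c => ∑ i, x i ^ (Finset.card c.support))).symm

end PowerSum
section Tableau
open Equiv Equiv.Perm

/-- Row and column functions of a tableau: injectivity and lower-closedness of columns. -/
structure IsTab {k : ℕ} (r c : Fin k → ℕ) : Prop where
  inj : ∀ i j, r i = r j → c i = c j → i = j
  low : ∀ j, ∀ m < r j, ∃ i, r i = m ∧ c i = c j

/-- `f` is injective on the columns. -/
def ColInj {k : ℕ} (c : Fin k → ℕ) (f : Fin k → ℕ) : Prop :=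
  ∀ i j, c i = c j → f i = f j → i = j

lemma col_le {k : ℕ} {r c : Fin k → ℕ} (hT : IsTab r c) {f : Fin k → ℕ} (hf : ColInj c f)
    (m y : ℕ) :
    ((univ.filter (fun j => f j < m)).filter (fun j => c j = y)).card ≤
      ((univ.filter (fun j => r j < m)).filter (fun j => c j = y)).card := by
  by_cases h : ∃ j, c j = y ∧ m ≤ r j
  · obtain ⟨j, hj, hm⟩ := h
    trans m
    · have : ((univ.filter (fun j => f j < m)).filter (fun j => c j = y)).card ≤ (range m).card := by
        refine Finset.card_le_card_of_injOn f ?_ ?_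
        · intro i hi; simp at hi ⊢; exact hi.1
        · intro a ha b hb hab
          simp at ha hb
          exact hf a b (ha.2.trans hb.2.symm) hab
      simpa using this
    · have : (range m).card ≤
          (((univ.filter (fun j => r j < m)).filter (fun j => c j = y)).image r).card := by
        refine Finset.card_le_card ?_
        intro a ha
        simp only [Finset.mem_range] at ha
        obtain ⟨i, hi, hi'⟩ := hT.low j a (by omega)
        simp only [Finset.mem_image, Finset.mem_filter, Finset.mem_univ, true_and]
        exact ⟨i, ⟨by omega, by omega⟩, hi⟩
      rw [Finset.card_range] at this
      exact this.trans Finset.card_image_le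
  · push Not at h
    refine Finset.card_le_card ?_
    intro j hj
    simp at hj ⊢
    exact ⟨h j hj.2, hj.2⟩

lemma card_by_col {k : ℕ} (c : Fin k → ℕ) (s : Finset (Fin k)) :
    s.card = ∑ y ∈ univ.image c, (s.filter (fun j => c j = y)).card :=
  Finset.card_eq_sum_card_fiberwise (fun j _ => by simp)

lemma dominance {k : ℕ} {r c : Fin k → ℕ} (hT : IsTab r c) {f : Fin k → ℕ} (hf : ColInj c f)
    (m : ℕ) : (univ.filter (fun j => f j < m)).card ≤ (univ.filter (fun j => r j < m)).card := by
  rw [card_by_col c, card_by_col c (univ.filter (fun j => r j < m))]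
  exact Finset.sum_le_sum fun y _ => col_le hT hf m y

lemma exists_col_perm {k : ℕ} {r c : Fin k → ℕ} (hT : IsTab r c) {f : Fin k → ℕ}
    (hf : ColInj c f)
    (heq : ∀ m, (univ.filter (fun j => f j < m)).card = (univ.filter (fun j => r j < m)).card) :
    ∃ q : Perm (Fin k), (∀ j, c (q j) = c j) ∧ ∀ j, r (q j) = f j := by
  have h1 : ∀ m y, ((univ.filter (fun j => f j < m)).filter (fun j => c j = y)).card =
      ((univ.filter (fun j => r j < m)).filter (fun j => c j = y)).card := by
    intro m y
    by_cases hy : y ∈ univ.image c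
    · have h2 := heq m
      rw [card_by_col c, card_by_col c (univ.filter (fun j => r j < m))] at h2
      exact (Finset.sum_eq_sum_iff_of_le fun y _ => col_le hT hf m y).1 h2 y hy
    · rw [Finset.filter_eq_empty_iff.2, Finset.filter_eq_empty_iff.2]
      · intro j _ hj; exact hy (by simp [← hj])
      · intro j _ hj; exact hy (by simp [← hj])
  have h2 : ∀ g : Fin k → ℕ, ∀ m y,
      ((univ.filter (fun j => g j < m + 1)).filter (fun j => c j = y)).card =
      ((univ.filter (fun j => g j < m)).filter (fun j => c j = y)).card +
      (univ.filter (fun j => g j = m ∧ c j = y)).card := by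
    intro g m y
    rw [← Finset.card_union_of_disjoint]
    · congr 1
      ext j
      simp only [mem_filter, mem_univ, true_and, mem_union]
      constructor
      · rintro ⟨h, h'⟩
        rcases Nat.lt_succ_iff_lt_or_eq.1 h with h | h
        · exact Or.inl ⟨h, h'⟩
        · exact Or.inr ⟨h, h'⟩
      · rintro (⟨h, h'⟩ | ⟨h, h'⟩)
        · exact ⟨by omega, h'⟩
        · exact ⟨by omega, h'⟩
    · rw [Finset.disjoint_left]
      intro j hj hj'
      simp at hj hj'
      omega
  have h3 : ∀ m y, (univ.filter (fun j => f j = m ∧ c j = y)).card =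
      (univ.filter (fun j => r j = m ∧ c j = y)).card := by
    intro m y
    have e1 := h2 f m y
    have e2 := h2 r m y
    rw [h1, h1] at e1
    omega
  have h4 : ∀ j, ∃ i, r i = f j ∧ c i = c j := by
    intro j
    have h5 : 0 < (univ.filter (fun i => r i = f j ∧ c i = c j)).card := by
      rw [← h3]
      exact Finset.card_pos.2 ⟨j, by simp⟩
    obtain ⟨i, hi⟩ := Finset.card_pos.1 h5
    simp at hi
    exact ⟨i, hi⟩
  choose q hq1 hq2 using h4
  have hinj : Function.Injective q := by
    intro i j hij
    apply hf
    · rw [← hq2 i, ← hq2 j, hij]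
    · rw [← hq1 i, ← hq1 j, hij]
  exact ⟨Equiv.ofBijective q (Finite.injective_iff_bijective.1 hinj), hq2, hq1⟩

/-- A repeated value in a column gives a transposition in the column group. -/
lemma exists_col_swap {k : ℕ} {c f : Fin k → ℕ} (hf : ¬ ColInj c f) :
    ∃ s : Perm (Fin k), (∀ j, c (s j) = c j) ∧ (∀ j, f (s j) = f j) ∧ sign s = -1 := by
  unfold ColInj at hf
  push Not at hf
  obtain ⟨i, j, h1, h2, h3⟩ := hf
  refine ⟨swap i j, ?_, ?_, sign_swap h3⟩
  · intro l
    by_cases hi : l = i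
    · subst hi; simp [h1]
    · by_cases hj : l = j
      · subst hj; simp [h1]
      · rw [swap_apply_of_ne_of_ne hi hj]
  · intro l
    by_cases hi : l = i
    · subst hi; simp [h2]
    · by_cases hj : l = j
      · subst hj; simp [h2]
      · rw [swap_apply_of_ne_of_ne hi hj]

lemma isTab_of_bijOn {k : ℕ} {lam : ℕ → ℕ} (hlam : IsPartitionOf k lam) {t : Fin k → ℕ × ℕ}
    (ht : Set.BijOn t Set.univ ↑(youngCells k lam)) :
    IsTab (fun j => (t j).1) (fun j => (t j).2) := by
  constructor
  · intro i j h1 h2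
    exact ht.injOn (Set.mem_univ _) (Set.mem_univ _) (Prod.ext h1 h2)
  · intro j m hm
    have h1 : t j ∈ youngCells k lam := ht.mapsTo (Set.mem_univ j)
    have h2 : (m, (t j).2) ∈ youngCells k lam := by
      simp only [youngCells, mem_filter, mem_product, Finset.mem_range] at h1 ⊢
      have := hlam.1 hm.le
      omega
    obtain ⟨i, _, hi⟩ := ht.surjOn h2
    exact ⟨i, by simp [hi], by simp [hi]⟩

lemma lam_le {k : ℕ} {lam : ℕ → ℕ} (hlam : IsPartitionOf k lam) (i : ℕ) : lam i ≤ k := by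
  by_cases h : i < k
  · rw [← hlam.2.2]
    exact Finset.single_le_sum (f := lam) (fun _ _ => Nat.zero_le _) (Finset.mem_range.2 h)
  · rw [hlam.2.1 i (by omega)]; omega

lemma card_row {k : ℕ} {lam : ℕ → ℕ} (hlam : IsPartitionOf k lam) {t : Fin k → ℕ × ℕ}
    (ht : Set.BijOn t Set.univ ↑(youngCells k lam)) (i : ℕ) :
    (univ.filter (fun j => (t j).1 = i)).card = lam i := by
  rw [← Finset.card_range (lam i)]
  refine Finset.card_bij (fun j _ => (t j).2) ?_ ?_ ?_
  · intro j hj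
    have h1 : t j ∈ youngCells k lam := ht.mapsTo (Set.mem_univ j)
    simp only [youngCells, mem_filter, mem_product, Finset.mem_range, mem_univ, true_and] at h1 hj ⊢
    rw [← hj]; exact h1.2
  · intro a ha b hb h
    simp only [mem_filter, mem_univ, true_and] at ha hb
    exact ht.injOn (Set.mem_univ _) (Set.mem_univ _) (Prod.ext (ha.trans hb.symm) h)
  · intro b hb
    have h2 : (i, b) ∈ youngCells k lam := by
      simp only [youngCells, mem_filter, mem_product, Finset.mem_range] at hb ⊢
      have := lam_le hlam i
      refine ⟨⟨?_, by omega⟩, hb⟩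
      by_contra hcon
      have := hlam.2.1 i (by omega)
      omega
    obtain ⟨j, _, hj⟩ := ht.surjOn h2
    exact ⟨j, by simp [hj], by simp [hj]⟩

lemma card_cells {k : ℕ} {lam : ℕ → ℕ} (hlam : IsPartitionOf k lam) :
    (youngCells k lam).card = k := by
  rw [Finset.card_eq_sum_card_fiberwise (f := Prod.fst) (t := range k)]
  · conv_rhs => rw [← hlam.2.2]
    refine Finset.sum_congr rfl fun i hi => ?_
    rw [← Finset.card_range (lam i)]
    refine Finset.card_bij (fun c _ => c.2) ?_ ?_ ?_
    · intro c hc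
      simp only [youngCells, mem_filter, mem_product, Finset.mem_range] at hc ⊢
      rw [← hc.2]; exact hc.1.2
    · intro a ha b hb h
      simp only [mem_filter] at ha hb
      exact Prod.ext (ha.2.trans hb.2.symm) h
    · intro b hb
      simp only [youngCells, mem_filter, mem_product, Finset.mem_range] at hb hi ⊢
      have := lam_le hlam i
      exact ⟨(i, b), ⟨⟨⟨by omega, by simp; omega⟩, hb⟩, rfl⟩, rfl⟩
  · intro c hc
    simp only [youngCells, Finset.coe_filter, Set.mem_ofPred_eq, mem_product] at hc
    exact hc.1.1

lemma exists_tab {k : ℕ} {lam : ℕ → ℕ} (hlam : IsPartitionOf k lam) :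
    ∃ t : Fin k → ℕ × ℕ, Set.BijOn t Set.univ ↑(youngCells k lam) := by
  let e := (Finset.equivFinOfCardEq (card_cells hlam)).symm
  refine ⟨fun j => (e j : ℕ × ℕ), ?_, ?_, ?_⟩
  · intro j _; exact (e j).2
  · intro a _ b _ h; exact e.injective (Subtype.ext h)
  · intro x hx
    exact ⟨e.symm ⟨x, hx⟩, Set.mem_univ _, by simp⟩

end Tableau
section GroupAlgebra
open Equiv Equiv.Perm

/-- permutations preserving the function `r` -/
def presG {k : ℕ} (r : Fin k → ℕ) : Finset (Perm (Fin k)) :=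
  univ.filter (fun π : Perm (Fin k) => ∀ j, r (π j) = r j)

lemma mem_presG {k : ℕ} {r : Fin k → ℕ} {π : Perm (Fin k)} :
    π ∈ presG r ↔ ∀ j, r (π j) = r j := by simp [presG]

lemma presG_mul {k : ℕ} {r : Fin k → ℕ} {π ρ : Perm (Fin k)} (h : π ∈ presG r)
    (h' : ρ ∈ presG r) : π * ρ ∈ presG r := by
  rw [mem_presG] at *
  intro j
  rw [Perm.mul_apply, h, h']

lemma presG_inv {k : ℕ} {r : Fin k → ℕ} {π : Perm (Fin k)} (h : π ∈ presG r) :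
    π⁻¹ ∈ presG r := by
  rw [mem_presG] at *
  intro j
  have := h (π⁻¹ j)
  rw [← this]
  simp

lemma presG_one {k : ℕ} {r : Fin k → ℕ} : (1 : Perm (Fin k)) ∈ presG r := by
  simp [mem_presG]

lemma sum_presG_mul_left {k : ℕ} {r : Fin k → ℕ} {M : Type*} [AddCommMonoid M]
    {g : Perm (Fin k)} (hg : g ∈ presG r) (F : Perm (Fin k) → M) :
    ∑ π ∈ presG r, F (g * π) = ∑ π ∈ presG r, F π := by
  refine Finset.sum_bij (fun π _ => g * π) (fun π h => presG_mul hg h) ?_ ?_ ?_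
  · intro a _ b _ h; exact mul_left_cancel h
  · intro b hb; exact ⟨g⁻¹ * b, presG_mul (presG_inv hg) hb, by simp⟩
  · intro a _; rfl

lemma sum_presG_mul_right {k : ℕ} {r : Fin k → ℕ} {M : Type*} [AddCommMonoid M]
    {g : Perm (Fin k)} (hg : g ∈ presG r) (F : Perm (Fin k) → M) :
    ∑ π ∈ presG r, F (π * g) = ∑ π ∈ presG r, F π := by
  refine Finset.sum_bij (fun π _ => π * g) (fun π h => presG_mul h hg) ?_ ?_ ?_
  · intro a _ b _ h; exact mul_right_cancel h
  · intro b hb; exact ⟨b * g⁻¹, presG_mul hb (presG_inv hg), by simp⟩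
  · intro a _; rfl

/-- column antisymmetrizer -/
def colA {k : ℕ} (c : Fin k → ℕ) : MonoidAlgebra ℂ (Perm (Fin k)) :=
  ∑ π ∈ presG c, MonoidAlgebra.single π ((sign π : ℤ) : ℂ)

/-- row symmetrizer -/
def rowA {k : ℕ} (r : Fin k → ℕ) : MonoidAlgebra ℂ (Perm (Fin k)) :=
  ∑ π ∈ presG r, MonoidAlgebra.single π (1 : ℂ)

lemma youngSym_eq (k : ℕ) (t : Fin k → ℕ × ℕ) :
    youngSym k t = colA (fun j => (t j).2) * rowA (fun j => (t j).1) := rfl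

lemma sign_sq_cast {k : ℕ} (q : Perm (Fin k)) : ((sign q : ℤ) : ℂ) * ((sign q : ℤ) : ℂ) = 1 := by
  rcases Int.units_eq_one_or (sign q) with h | h <;> simp [h]

lemma colA_mul_single {k : ℕ} {c : Fin k → ℕ} {q : Perm (Fin k)} (hq : q ∈ presG c) :
    colA c * MonoidAlgebra.single q (1 : ℂ) = ((sign q : ℤ) : ℂ) • colA c := by
  unfold colA
  rw [Finset.sum_mul, Finset.smul_sum]
  conv_rhs => rw [← sum_presG_mul_right hq]
  refine Finset.sum_congr rfl fun π _ => ?_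
  rw [MonoidAlgebra.single_mul_single, MonoidAlgebra.smul_single, mul_one, Perm.sign_mul]
  congr 1
  push_cast
  rw [smul_eq_mul, mul_left_comm, sign_sq_cast, mul_one]

lemma single_mul_rowA {k : ℕ} {r : Fin k → ℕ} {p : Perm (Fin k)} (hp : p ∈ presG r) :
    MonoidAlgebra.single p (1 : ℂ) * rowA r = rowA r := by
  unfold rowA
  rw [Finset.mul_sum]
  conv_rhs => rw [← sum_presG_mul_left hp]
  refine Finset.sum_congr rfl fun π _ => ?_
  rw [MonoidAlgebra.single_mul_single, mul_one]

lemma counts_comp {k : ℕ} (r : Fin k → ℕ) (u : Perm (Fin k)) (m : ℕ) :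
    (univ.filter (fun j => r (u j) < m)).card = (univ.filter (fun j => r j < m)).card := by
  refine Finset.card_bij (fun j _ => u j) ?_ ?_ ?_
  · intro j hj; simpa using hj
  · intro a _ b _ h; exact u.injective h
  · intro b hb; exact ⟨u⁻¹ b, by simpa using hb, by simp⟩

/-- The von Neumann lemma. -/
lemma col_mul_row {k : ℕ} {r c : Fin k → ℕ} (hT : IsTab r c) (u : Perm (Fin k)) :
    ∃ z : ℂ, colA c * MonoidAlgebra.single u (1 : ℂ) * rowA r = z • (colA c * rowA r) := by
  by_cases hf : ColInj c (fun j => r (u⁻¹ j))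
  · obtain ⟨q, hq1, hq2⟩ := exists_col_perm hT hf (counts_comp r u⁻¹)
    have hq : q⁻¹ ∈ presG c := presG_inv (mem_presG.2 hq1)
    have hp : q * u ∈ presG r := by
      rw [mem_presG]; intro j
      rw [Perm.mul_apply, hq2]; simp
    refine ⟨((sign q⁻¹ : ℤ) : ℂ), ?_⟩
    have : MonoidAlgebra.single u (1 : ℂ) =
        MonoidAlgebra.single q⁻¹ (1 : ℂ) * MonoidAlgebra.single (q * u) (1 : ℂ) := by
      rw [MonoidAlgebra.single_mul_single]; simp
    rw [this, ← mul_assoc, colA_mul_single hq, mul_assoc, single_mul_rowA hp, smul_mul_assoc]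
  · obtain ⟨s, hs1, hs2, hs3⟩ := exists_col_swap hf
    refine ⟨0, ?_⟩
    have hs : s ∈ presG c := mem_presG.2 hs1
    have hp : u⁻¹ * s⁻¹ * u ∈ presG r := by
      have : u⁻¹ * s * u ∈ presG r := by
        rw [mem_presG]; intro j
        have := hs2 (u j)
        simpa [Perm.mul_apply] using this
      have := presG_inv this
      simpa [mul_assoc] using this
    have h1 : MonoidAlgebra.single u (1 : ℂ) =
        MonoidAlgebra.single s (1 : ℂ) * (MonoidAlgebra.single u (1 : ℂ) *
          MonoidAlgebra.single (u⁻¹ * s⁻¹ * u) (1 : ℂ)) := by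
      rw [MonoidAlgebra.single_mul_single, MonoidAlgebra.single_mul_single]; simp [← mul_assoc]
    have h2 : colA c * MonoidAlgebra.single u (1 : ℂ) * rowA r =
        - (colA c * MonoidAlgebra.single u (1 : ℂ) * rowA r) := by
      conv_lhs => rw [h1]
      rw [← mul_assoc, ← mul_assoc, colA_mul_single hs, mul_assoc, single_mul_rowA hp, hs3]
      simp
    rw [zero_smul]
    have h3 : (2 : ℂ) • (colA c * MonoidAlgebra.single u (1 : ℂ) * rowA r) = 0 := by
      rw [two_smul]
      nth_rewrite 1 [h2]
      exact neg_add_cancel _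
    exact (smul_eq_zero.1 h3).resolve_left two_ne_zero

lemma col_mul_row' {k : ℕ} {r c : Fin k → ℕ} (hT : IsTab r c)
    (X : MonoidAlgebra ℂ (Perm (Fin k))) :
    ∃ z : ℂ, colA c * X * rowA r = z • (colA c * rowA r) := by
  induction X using MonoidAlgebra.induction_linear with
  | zero => exact ⟨0, by simp⟩
  | add f g hf hg =>
    obtain ⟨z, hz⟩ := hf
    obtain ⟨w, hw⟩ := hg
    exact ⟨z + w, by rw [mul_add, add_mul, hz, hw, add_smul]⟩
  | single u x =>
    obtain ⟨z, hz⟩ := col_mul_row hT u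
    refine ⟨x * z, ?_⟩
    have : MonoidAlgebra.single u x = x • MonoidAlgebra.single u (1 : ℂ) := by
      rw [MonoidAlgebra.smul_single]; simp
    rw [this, mul_smul_comm, smul_mul_assoc, hz, smul_smul]

/-- integral coefficients of the Young symmetrizer -/
def yE {k : ℕ} (r c : Fin k → ℕ) (g : Perm (Fin k)) : ℤ :=
  ∑ q ∈ presG c, ∑ p ∈ presG r, if q * p = g then (sign q : ℤ) else 0

lemma coeff_yE {k : ℕ} (r c : Fin k → ℕ) (g : Perm (Fin k)) :
    (colA c * rowA r).coeff g = (yE r c g : ℂ) := by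
  unfold colA rowA yE
  rw [Finset.sum_mul, MonoidAlgebra.coeff_sum, Finsupp.finsetSum_apply]
  push_cast
  refine Finset.sum_congr rfl fun q _ => ?_
  rw [Finset.mul_sum, MonoidAlgebra.coeff_sum, Finsupp.finsetSum_apply]
  refine Finset.sum_congr rfl fun p _ => ?_
  rw [MonoidAlgebra.single_mul_single, MonoidAlgebra.coeff_single, Finsupp.single_apply, mul_one]

lemma yE_one {k : ℕ} {r c : Fin k → ℕ} (hT : IsTab r c) : yE r c 1 = 1 := by
  unfold yE
  rw [Finset.sum_eq_single 1, Finset.sum_eq_single 1]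
  · simp
  · intro p _ hp; simp [hp]
  · intro h; exact absurd presG_one h
  · intro q hq hq1
    refine Finset.sum_eq_zero fun p hp => ?_
    rw [if_neg]
    intro h
    apply hq1
    have hqr : q ∈ presG r := by
      rw [eq_inv_of_mul_eq_one_left h]; exact presG_inv hp
    rw [mem_presG] at hq hqr
    ext j
    rw [hT.inj (q j) j (hqr j) (hq j)]; rfl
  · intro h; exact absurd presG_one h

/-- The functional `X ↦ coeff_1 (b X a)`. -/
def kap {k : ℕ} (r c : Fin k → ℕ) (X : MonoidAlgebra ℂ (Perm (Fin k))) : ℂ :=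
  (colA c * X * rowA r).coeff 1

lemma kap_spec {k : ℕ} {r c : Fin k → ℕ} (hT : IsTab r c)
    (X : MonoidAlgebra ℂ (Perm (Fin k))) :
    colA c * X * rowA r = kap r c X • (colA c * rowA r) := by
  obtain ⟨z, hz⟩ := col_mul_row' hT X
  have : kap r c X = z := by
    unfold kap
    rw [hz, MonoidAlgebra.coeff_smul_apply, coeff_yE, yE_one hT]; simp
  rw [this, hz]

/-- The scalar `n` with `e² = n e`. -/
def yN {k : ℕ} (r c : Fin k → ℕ) : ℤ := ∑ g, yE r c g * yE r c g⁻¹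

lemma coeff_one_mul {k : ℕ} (X Y : MonoidAlgebra ℂ (Perm (Fin k))) :
    (X * Y).coeff 1 = ∑ g, X.coeff g * Y.coeff g⁻¹ := by
  rw [MonoidAlgebra.coeff_mul_apply_left, Finsupp.sum_fintype]
  · simp
  · simp

lemma young_sq {k : ℕ} {r c : Fin k → ℕ} (hT : IsTab r c) :
    (colA c * rowA r) * (colA c * rowA r) = (yN r c : ℂ) • (colA c * rowA r) := by
  have h1 : (colA c * rowA r) * (colA c * rowA r) = colA c * (rowA r * colA c) * rowA r := by
    simp only [mul_assoc]
  have h2 : (yN r c : ℂ) = kap r c (rowA r * colA c) := by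
    unfold kap
    rw [← h1, coeff_one_mul]
    simp only [coeff_yE, yN]
    push_cast
    rfl
  rw [h1, h2, ← kap_spec hT]

lemma kap_sum {k : ℕ} {r c : Fin k → ℕ} {ι : Type*} (s : Finset ι) (z : ι → ℂ)
    (X : ι → MonoidAlgebra ℂ (Perm (Fin k))) :
    ∑ i ∈ s, z i * kap r c (X i) = kap r c (∑ i ∈ s, z i • X i) := by
  unfold kap
  rw [Finset.mul_sum, Finset.sum_mul, MonoidAlgebra.coeff_sum, Finsupp.finsetSum_apply]
  refine Finset.sum_congr rfl fun i _ => ?_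
  rw [mul_smul_comm, smul_mul_assoc, MonoidAlgebra.coeff_smul_apply, smul_eq_mul]

lemma eq_sum_single {k : ℕ} (X : MonoidAlgebra ℂ (Perm (Fin k))) :
    X = ∑ g, X.coeff g • MonoidAlgebra.single g (1 : ℂ) := by
  conv_lhs => rw [← MonoidAlgebra.sum_coeff_single X, Finsupp.sum_fintype _ _ (by simp)]
  refine Finset.sum_congr rfl fun g _ => ?_
  rw [MonoidAlgebra.smul_single]; simp

/-- norm computation -/
lemma yE_norm {k : ℕ} {r c : Fin k → ℕ} (hT : IsTab r c) :
    ∑ v : Perm (Fin k), ∑ g, (yE r c g : ℂ) * (yE r c (v⁻¹ * g⁻¹ * v) : ℂ) =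
      (yN r c : ℂ) ^ 2 := by
  set e := colA c * rowA r with he
  have h1 : ∀ v : Perm (Fin k), ∑ g, (yE r c g : ℂ) * (yE r c (v⁻¹ * g⁻¹ * v) : ℂ) =
      (yE r c v : ℂ) * kap r c (rowA r * MonoidAlgebra.single v 1 * colA c) := by
    intro v
    have h2 : (e * (MonoidAlgebra.single v (1 : ℂ) * e * MonoidAlgebra.single v⁻¹ (1 : ℂ))).coeff 1
        = ∑ g, (yE r c g : ℂ) * (yE r c (v⁻¹ * g⁻¹ * v) : ℂ) := by
      rw [coeff_one_mul]
      refine Finset.sum_congr rfl fun g _ => ?_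
      rw [MonoidAlgebra.coeff_mul_single_apply, MonoidAlgebra.coeff_single_mul_apply, he,
        coeff_yE, coeff_yE]
      simp [mul_assoc]
    rw [← h2]
    have h3 : e * (MonoidAlgebra.single v (1 : ℂ) * e * MonoidAlgebra.single v⁻¹ (1 : ℂ)) =
        (colA c * (rowA r * MonoidAlgebra.single v 1 * colA c) * rowA r) *
          MonoidAlgebra.single v⁻¹ (1 : ℂ) := by
      rw [he]; simp only [mul_assoc]
    rw [h3, kap_spec hT, smul_mul_assoc, MonoidAlgebra.coeff_smul_apply,
      MonoidAlgebra.coeff_mul_single_apply, coeff_yE]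
    simp [mul_comm]
  simp only [h1]
  rw [kap_sum]
  have h4 : ∑ v : Perm (Fin k), (yE r c v : ℂ) • (rowA r * MonoidAlgebra.single v 1 * colA c) =
      rowA r * e * colA c := by
    conv_rhs => rw [eq_sum_single e]
    rw [Finset.mul_sum, Finset.sum_mul]
    refine Finset.sum_congr rfl fun g _ => ?_
    rw [he, coeff_yE, mul_smul_comm, smul_mul_assoc]
  rw [h4]
  have h5 : colA c * (rowA r * e * colA c) * rowA r = e * e * e := by
    rw [he]; simp only [mul_assoc]
  unfold kap
  rw [h5, young_sq hT, smul_mul_assoc, young_sq hT, smul_smul, MonoidAlgebra.coeff_smul_apply,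
    coeff_yE, yE_one hT]
  simp [pow_two]

lemma trace_lr {k : ℕ} (π : Perm (Fin k)) (X : MonoidAlgebra ℂ (Perm (Fin k))) :
    LinearMap.trace ℂ _ ((LinearMap.mulLeft ℂ (MonoidAlgebra.single π (1 : ℂ))) ∘ₗ
      (LinearMap.mulRight ℂ X)) = ∑ h, X.coeff (h⁻¹ * π⁻¹ * h) := by
  rw [LinearMap.trace_eq_matrix_trace ℂ (MonoidAlgebra.basis (Perm (Fin k)) ℂ), Matrix.trace]
  refine Finset.sum_congr rfl fun h _ => ?_
  rw [Matrix.diag_apply, LinearMap.toMatrix_apply, MonoidAlgebra.basis_apply]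
  simp only [LinearMap.comp_apply, LinearMap.mulLeft_apply, LinearMap.mulRight_apply]
  change (MonoidAlgebra.single π (1 : ℂ) * (MonoidAlgebra.single h (1 : ℂ) * X)).coeff h = _
  rw [MonoidAlgebra.coeff_single_mul_apply, MonoidAlgebra.coeff_single_mul_apply]
  simp [mul_assoc]

lemma yN_ne_zero {k : ℕ} {r c : Fin k → ℕ} (hT : IsTab r c) : (yN r c : ℂ) ≠ 0 := by
  intro h0
  set e := colA c * rowA r with he
  have h1 : IsNilpotent (LinearMap.mulRight ℂ e) := by
    refine ⟨2, ?_⟩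
    refine LinearMap.ext fun x => ?_
    rw [pow_two, Module.End.mul_apply, LinearMap.mulRight_apply, LinearMap.mulRight_apply, mul_assoc,
      he, young_sq hT, h0]
    simp
  have h2 := (LinearMap.isNilpotent_trace_of_isNilpotent h1).eq_zero
  have h3 := trace_lr (1 : Perm (Fin k)) e
  have h4 : (LinearMap.mulLeft ℂ (MonoidAlgebra.single (1 : Perm (Fin k)) (1 : ℂ))) ∘ₗ
      (LinearMap.mulRight ℂ e) = LinearMap.mulRight ℂ e := by
    ext x : 1
    simp [← MonoidAlgebra.one_def]
  rw [h4, h2, he] at h3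
  simp only [coeff_yE, inv_one, mul_one, inv_mul_cancel, yE_one hT] at h3
  simp [Fintype.card_perm] at h3
  exact Nat.factorial_ne_zero k (by exact_mod_cast h3.symm)

lemma trace_range {V : Type*} [AddCommGroup V] [Module ℂ V] [FiniteDimensional ℂ V]
    (P T : V →ₗ[ℂ] V) (n : ℂ) (hn : n ≠ 0) (hP : ∀ x, P (P x) = n • P x)
    (hPT : ∀ x, P (T x) = T (P x))
    (hT : ∀ x ∈ LinearMap.range P, T x ∈ LinearMap.range P) :
    LinearMap.trace ℂ (LinearMap.range P) (T.restrict hT) =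
      n⁻¹ * LinearMap.trace ℂ V (T ∘ₗ P) := by
  have h1 : T ∘ₗ P = (T ∘ₗ (LinearMap.range P).subtype) ∘ₗ P.rangeRestrict := by
    ext x; rfl
  rw [h1, LinearMap.trace_comp_comm']
  have h2 : P.rangeRestrict ∘ₗ T ∘ₗ (LinearMap.range P).subtype = n • T.restrict hT := by
    ext ⟨x, y, rfl⟩
    simp [hPT, hP, LinearMap.restrict_apply]
  rw [h2, map_smul, smul_eq_mul, ← mul_assoc, inv_mul_cancel₀ hn, one_mul]

lemma youngIdealChar_eq {k : ℕ} (t : Fin k → ℕ × ℕ)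
    (hT : IsTab (fun j => (t j).1) (fun j => (t j).2)) (π : Perm (Fin k)) :
    youngIdealChar k t π = (yN (fun j => (t j).1) (fun j => (t j).2) : ℂ)⁻¹ *
      ∑ h, (yE (fun j => (t j).1) (fun j => (t j).2) (h⁻¹ * π⁻¹ * h) : ℂ) := by
  unfold youngIdealChar youngIdeal
  refine (trace_range (LinearMap.mulRight ℂ (youngSym k t))
    (LinearMap.mulLeft ℂ (MonoidAlgebra.single π (1 : ℂ))) _ (yN_ne_zero hT) ?_ ?_ _).trans ?_
  · intro x
    rw [LinearMap.mulRight_apply, LinearMap.mulRight_apply, mul_assoc, youngSym_eq, young_sq hT,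
      mul_smul_comm]
  · intro x
    simp [mul_assoc]
  · rw [trace_lr]
    simp only [youngSym_eq, coeff_yE]

end GroupAlgebra
section Pairing
open Equiv Equiv.Perm

/-- Precomposition with a permutation. -/
def preComp {k d : ℕ} (h : Perm (Fin k)) : (Fin k → Fin d) ≃ (Fin k → Fin d) where
  toFun f := f ∘ h
  invFun f := f ∘ (h⁻¹ : Perm (Fin k))
  left_inv f := by funext j; simp
  right_inv f := by funext j; simp

/-- The sum of the Young symmetrizer coefficients over stabilizers of functions in `W`. -/
def stabSum {k : ℕ} (d : ℕ) (r c : Fin k → ℕ) (W : (Fin k → Fin d) → Prop) [DecidablePred W] : ℤ :=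
  ∑ f : Fin k → Fin d, ∑ π : Perm (Fin k), if W f ∧ f ∘ π = f then yE r c π else 0

lemma comp_mul_eq {k d : ℕ} (f : Fin k → Fin d) (a b : Perm (Fin k)) :
    f ∘ (a * b : Perm (Fin k)) = (f ∘ a) ∘ b := rfl

lemma comp_eq_iff {k d : ℕ} (f g : Fin k → Fin d) (a : Perm (Fin k)) :
    f ∘ a = g ↔ f = g ∘ (a⁻¹ : Perm (Fin k)) := by
  constructor
  · rintro rfl; funext j; simp
  · rintro rfl; funext j; simp

lemma pair_stab {k d : ℕ} (r c : Fin k → ℕ) (W : (Fin k → Fin d) → Prop) [DecidablePred W]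
    (hW : ∀ f (h : Perm (Fin k)), W f → W (f ∘ h)) :
    ∑ π : Perm (Fin k), (∑ h : Perm (Fin k), yE r c (h⁻¹ * π⁻¹ * h)) *
      (∑ f : Fin k → Fin d, if W f ∧ f ∘ π = f then (1 : ℤ) else 0) =
      (k ! : ℤ) * stabSum d r c W := by
  have hW' : ∀ f (h : Perm (Fin k)), W (f ∘ h) ↔ W f := by
    intro f h
    refine ⟨fun H => ?_, hW f h⟩
    have := hW _ h⁻¹ H
    rwa [← comp_mul_eq, mul_inv_cancel] at this
  have h1 : ∀ h : Perm (Fin k), ∑ f : Fin k → Fin d, ∑ π : Perm (Fin k),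
      (if W f ∧ f ∘ π = f then yE r c (h⁻¹ * π⁻¹ * h) else 0) = stabSum d r c W := by
    intro h
    unfold stabSum
    refine Fintype.sum_equiv (preComp h) _ _ fun f => ?_
    refine Fintype.sum_equiv ((Equiv.inv (Perm (Fin k))).trans (MulAut.conj h⁻¹).toEquiv) _ _
      fun π => ?_
    simp only [Equiv.trans_apply, Equiv.inv_apply, preComp, Equiv.coe_fn_mk]
    have e1 : (MulAut.conj h⁻¹).toEquiv π⁻¹ = h⁻¹ * π⁻¹ * h := by simp
    rw [e1]
    have e2 : (f ∘ h) ∘ (h⁻¹ * π⁻¹ * h : Perm (Fin k)) = f ∘ h ↔ f ∘ π = f := by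
      rw [← comp_mul_eq]
      have : h * (h⁻¹ * π⁻¹ * h) = π⁻¹ * h := by group
      rw [this, comp_mul_eq, comp_eq_iff, comp_eq_iff, ← comp_mul_eq, ← comp_mul_eq,
        mul_inv_cancel_left]
      simp only [inv_inv]
      constructor
      · intro H; exact H.symm
      · intro H; exact H.symm
    simp only [hW', e2]
  have h2 : ∑ π : Perm (Fin k), (∑ h : Perm (Fin k), yE r c (h⁻¹ * π⁻¹ * h)) *
      (∑ f : Fin k → Fin d, if W f ∧ f ∘ π = f then (1 : ℤ) else 0) =
      ∑ h : Perm (Fin k), ∑ f : Fin k → Fin d, ∑ π : Perm (Fin k),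
      (if W f ∧ f ∘ π = f then yE r c (h⁻¹ * π⁻¹ * h) else 0) := by
    have e : ∀ π : Perm (Fin k), (∑ h : Perm (Fin k), yE r c (h⁻¹ * π⁻¹ * h)) *
      (∑ f : Fin k → Fin d, if W f ∧ f ∘ π = f then (1 : ℤ) else 0) =
      ∑ h : Perm (Fin k), ∑ f : Fin k → Fin d,
      (if W f ∧ f ∘ π = f then yE r c (h⁻¹ * π⁻¹ * h) else 0) := by
      intro π
      rw [Finset.sum_mul]
      simp only [Finset.mul_sum, mul_ite, mul_one, mul_zero]
    rw [Finset.sum_congr rfl fun π _ => e π]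
    rw [Finset.sum_comm]
    refine Finset.sum_congr rfl fun h _ => ?_
    rw [Finset.sum_comm]
  rw [h2]
  simp only [h1]
  simp [Fintype.card_perm]

lemma stabSum_eq {k d : ℕ} (r c : Fin k → ℕ) (W : (Fin k → Fin d) → Prop) [DecidablePred W]
    (hW : ∀ f (h : Perm (Fin k)), W f → W (f ∘ h)) :
    stabSum d r c W = ∑ p ∈ presG r, ∑ f : Fin k → Fin d, if W f then
      ∑ q ∈ presG c, (if f ∘ (p * q : Perm (Fin k)) = f then (sign q : ℤ) else 0) else 0 := by
  have hW' : ∀ f (h : Perm (Fin k)), W (f ∘ h) ↔ W f := by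
    intro f h
    refine ⟨fun H => ?_, hW f h⟩
    have := hW _ h⁻¹ H
    rwa [← comp_mul_eq, mul_inv_cancel] at this
  have h1 : ∀ f : Fin k → Fin d, ∑ π : Perm (Fin k), (if W f ∧ f ∘ π = f then yE r c π else 0) =
      ∑ p ∈ presG r, if W f then ∑ q ∈ presG c,
        (if f ∘ (q * p : Perm (Fin k)) = f then (sign q : ℤ) else 0) else 0 := by
    intro f
    by_cases hf : W f
    · simp only [hf, true_and, if_true]
      rw [Finset.sum_comm]
      have : ∀ π : Perm (Fin k), (if f ∘ π = f then yE r c π else 0) =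
          ∑ q ∈ presG c, ∑ p ∈ presG r,
            (if q * p = π then (if f ∘ π = f then (sign q : ℤ) else 0) else 0) := by
        intro π
        unfold yE
        split_ifs with h
        · rfl
        · simp
      simp only [this]
      rw [Finset.sum_comm]
      refine Finset.sum_congr rfl fun q _ => ?_
      rw [Finset.sum_comm]
      refine Finset.sum_congr rfl fun p _ => ?_
      rw [Finset.sum_ite_eq]
      simp
    · simp [hf]
  unfold stabSum
  simp only [h1]
  rw [Finset.sum_comm]
  refine Finset.sum_congr rfl fun p _ => ?_
  symm
  refine Fintype.sum_equiv (preComp p) _ _ fun f => ?_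
  simp only [preComp, Equiv.coe_fn_mk, hW']
  congr 1
  refine Finset.sum_congr rfl fun q _ => ?_
  congr 1
  rw [eq_iff_iff, ← comp_mul_eq, ← mul_assoc, comp_mul_eq f (p * q) p]
  constructor
  · intro H; rw [H]
  · intro H
    rw [comp_eq_iff, ← comp_mul_eq, mul_inv_cancel] at H
    exact H

lemma signed_zero {k d : ℕ} {c : Fin k → ℕ} (f : Fin k → Fin d)
    (hf : ¬ ColInj c (fun j => (f j : ℕ))) (p : Perm (Fin k)) :
    ∑ q ∈ presG c, (if f ∘ (p * q : Perm (Fin k)) = f then (sign q : ℤ) else 0) = 0 := by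
  obtain ⟨s, hs1, hs2, hs3⟩ := exists_col_swap hf
  have hs : s ∈ presG c := mem_presG.2 hs1
  have hfs : f ∘ s = f := by
    funext j; exact Fin.ext (hs2 j)
  have h1 : ∑ q ∈ presG c, (if f ∘ (p * q : Perm (Fin k)) = f then (sign q : ℤ) else 0) =
      - ∑ q ∈ presG c, (if f ∘ (p * q : Perm (Fin k)) = f then (sign q : ℤ) else 0) := by
    conv_lhs => rw [← sum_presG_mul_right hs]
    rw [← Finset.sum_neg_distrib]
    refine Finset.sum_congr rfl fun q _ => ?_
    have : f ∘ (p * (q * s) : Perm (Fin k)) = f ↔ f ∘ (p * q : Perm (Fin k)) = f := by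
      rw [← mul_assoc, comp_mul_eq, comp_eq_iff]
      have : f ∘ (s⁻¹ : Perm (Fin k)) = f := by
        rw [comp_eq_iff, inv_inv, hfs]
      rw [this]
    simp only [this, Perm.sign_mul, hs3]
    split_ifs <;> simp
  omega

lemma stabSum_zero {k d : ℕ} (r c : Fin k → ℕ) (W : (Fin k → Fin d) → Prop) [DecidablePred W]
    (hW : ∀ f (h : Perm (Fin k)), W f → W (f ∘ h))
    (hz : ∀ f, W f → ¬ ColInj c (fun j => (f j : ℕ))) : stabSum d r c W = 0 := by
  rw [stabSum_eq r c W hW]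
  refine Finset.sum_eq_zero fun p _ => Finset.sum_eq_zero fun f _ => ?_
  split_ifs with h
  · exact signed_zero f (hz f h) p
  · rfl

lemma yN_eq {k : ℕ} (r c : Fin k → ℕ) : yN r c = ∑ p ∈ presG r, ∑ q0 ∈ presG c, ∑ q ∈ presG c,
    if q0 * p * q ∈ presG r then (sign q0 : ℤ) * (sign q : ℤ) else 0 := by
  have h1 : yN r c = ∑ q0 ∈ presG c, ∑ p ∈ presG r, (sign q0 : ℤ) * yE r c (q0 * p)⁻¹ := by
    unfold yN
    have : ∀ g : Perm (Fin k), yE r c g * yE r c g⁻¹ = ∑ q0 ∈ presG c, ∑ p ∈ presG r,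
        (if q0 * p = g then (sign q0 : ℤ) * yE r c g⁻¹ else 0) := by
      intro g
      conv_lhs => rw [yE, Finset.sum_mul]
      refine Finset.sum_congr rfl fun q0 _ => ?_
      rw [Finset.sum_mul]
      refine Finset.sum_congr rfl fun p _ => ?_
      rw [ite_mul, zero_mul]
    simp only [this]
    rw [Finset.sum_comm]
    refine Finset.sum_congr rfl fun q0 _ => ?_
    rw [Finset.sum_comm]
    refine Finset.sum_congr rfl fun p _ => ?_
    rw [Finset.sum_ite_eq]
    simp
  rw [h1, Finset.sum_comm]
  refine Finset.sum_congr rfl fun p _ => Finset.sum_congr rfl fun q0 _ => ?_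
  rw [yE, Finset.mul_sum]
  refine Finset.sum_congr rfl fun q _ => ?_
  have h2 : ∀ p' : Perm (Fin k), q * p' = (q0 * p)⁻¹ ↔ p' = (q0 * p * q)⁻¹ := by
    intro p'
    rw [mul_inv_rev (q0 * p) q]
    constructor
    · intro h; rw [← h]; simp
    · intro h; rw [h]; simp
  simp only [h2]
  rw [Finset.sum_ite_eq']
  have h3 : (q0 * p * q)⁻¹ ∈ presG r ↔ q0 * p * q ∈ presG r :=
    ⟨fun h => by simpa using presG_inv h, presG_inv⟩
  simp only [h3]
  split_ifs <;> simp

lemma stabSum_self {k d : ℕ} {r c : Fin k → ℕ} (hT : IsTab r c) (W : (Fin k → Fin d) → Prop)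
    [DecidablePred W] (R : Fin k → Fin d) (hR : ∀ j, (R j : ℕ) = r j)
    (hW : ∀ f (h : Perm (Fin k)), W f → W (f ∘ h)) (hWR : W R)
    (hcount : ∀ f, W f → ∀ m, (univ.filter (fun j => (f j : ℕ) < m)).card =
      (univ.filter (fun j => r j < m)).card) : stabSum d r c W = yN r c := by
  classical
  rw [stabSum_eq r c W hW, yN_eq]
  refine Finset.sum_congr rfl fun p _ => ?_
  symm
  have hcomp : ∀ g : Perm (Fin k), R ∘ g = R ↔ g ∈ presG r := by
    intro g
    rw [mem_presG, funext_iff]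
    refine forall_congr' fun j => ?_
    rw [Fin.ext_iff, Function.comp_apply, hR, hR]
  have h1 : ∀ q0 ∈ presG c, ∑ q ∈ presG c,
      (if q0 * p * q ∈ presG r then (sign q0 : ℤ) * (sign q : ℤ) else 0) =
      ∑ q ∈ presG c,
        (if (R ∘ q0) ∘ (p * q : Perm (Fin k)) = R ∘ q0 then (sign q : ℤ) else 0) := by
    intro q0 hq0
    conv_rhs => rw [← sum_presG_mul_right hq0]
    refine Finset.sum_congr rfl fun q _ => ?_
    have : (R ∘ q0) ∘ (p * (q * q0) : Perm (Fin k)) = R ∘ q0 ↔ q0 * p * q ∈ presG r := by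
      rw [← hcomp, ← comp_mul_eq, ← mul_assoc, ← mul_assoc, comp_mul_eq R (q0 * p * q) q0,
        comp_eq_iff, ← comp_mul_eq, mul_inv_cancel]
      rfl
    simp only [this, Perm.sign_mul]
    split_ifs
    · push_cast; ring
    · rfl
  rw [Finset.sum_congr rfl h1]
  rw [← Finset.sum_filter]
  rw [← Finset.sum_filter_add_sum_filter_not (univ.filter W)
    (fun f => ColInj c (fun j => (f j : ℕ)))]
  rw [Finset.sum_eq_zero (s := (univ.filter W).filter
    (fun f => ¬ ColInj c (fun j => (f j : ℕ)))), add_zero]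
  · refine Finset.sum_bij (fun q0 _ => R ∘ q0) ?_ ?_ ?_ ?_
    · intro q0 hq0
      rw [mem_presG] at hq0
      simp only [mem_filter, mem_univ, true_and]
      refine ⟨hW R q0 hWR, ?_⟩
      intro i j h h'
      simp only [Function.comp_apply, hR] at h'
      exact q0.injective (hT.inj _ _ h' (by rw [hq0, hq0, h]))
    · intro a ha b hb h
      rw [mem_presG] at ha hb
      ext j
      have := congrFun h j
      simp only [Function.comp_apply, Fin.ext_iff, hR] at this
      rw [hT.inj (a j) (b j) this (by rw [ha, hb])]
    · intro f hf
      simp only [mem_filter, mem_univ, true_and] at hf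
      obtain ⟨q, hq1, hq2⟩ := exists_col_perm hT hf.2 (hcount f hf.1)
      refine ⟨q, mem_presG.2 hq1, ?_⟩
      funext j
      rw [Fin.ext_iff, Function.comp_apply, hR, hq2]
    · intro q0 _; rfl
  · intro f hf
    simp only [mem_filter] at hf
    exact signed_zero f hf.2 p

end Pairing
section Psi
open Equiv Equiv.Perm

/-- The content (weight) of a function. -/
def wt {k d : ℕ} (f : Fin k → Fin d) (i : Fin d) : ℕ := (univ.filter (fun j => f j = i)).card

/-- The staircase vector. -/
def dl {d : ℕ} (i : Fin d) : ℕ := d - 1 - (i : ℕ)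

/-- The virtual character attached to the exponent vector `α`. -/
def psi {k d : ℕ} (α : Fin d → ℕ) (π : Perm (Fin k)) : ℤ :=
  ∑ σ : Perm (Fin d), (sign σ : ℤ) * ∑ f : Fin k → Fin d,
    if (∀ i, wt f i + dl (σ i) = α i) ∧ f ∘ π = f then (1 : ℤ) else 0

lemma wt_comp {k d : ℕ} (f : Fin k → Fin d) (h : Perm (Fin k)) (i : Fin d) :
    wt (f ∘ h) i = wt f i := by
  unfold wt
  refine Finset.card_bij (fun j _ => h j) ?_ ?_ ?_
  · intro j hj; simpa using hj
  · intro a _ b _ hab; exact h.injective hab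
  · intro b hb
    exact ⟨h⁻¹ b, by simpa using hb, by simp⟩

lemma card_lt_wt {k d : ℕ} (f : Fin k → Fin d) (m : ℕ) :
    (univ.filter (fun j => (f j : ℕ) < m)).card =
      ∑ i ∈ univ.filter (fun i : Fin d => (i : ℕ) < m), wt f i := by
  rw [Finset.card_eq_sum_card_fiberwise (f := f) (t := univ.filter (fun i : Fin d => (i : ℕ) < m))]
  · refine Finset.sum_congr rfl fun i hi => ?_
    unfold wt
    congr 1
    ext j
    simp only [mem_filter, mem_univ, true_and] at hi ⊢
    constructor
    · exact fun h => h.2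
    · intro h; exact ⟨by rw [h]; exact hi, h⟩
  · intro j hj
    simpa using hj

lemma psi_pair {k d : ℕ} {lam : ℕ → ℕ} (hlam : IsPartitionOf k lam) (hd : ∀ i, d ≤ i → lam i = 0)
    {t : Fin k → ℕ × ℕ} (ht : Set.BijOn t Set.univ ↑(youngCells k lam)) :
    ∑ π : Perm (Fin k), (∑ h : Perm (Fin k),
      yE (fun j => (t j).1) (fun j => (t j).2) (h⁻¹ * π⁻¹ * h)) *
      psi (fun i : Fin d => lam i + dl i) π =
      (k ! : ℤ) * yN (fun j => (t j).1) (fun j => (t j).2) := by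
  have hT := isTab_of_bijOn hlam ht
  have hrow := card_row hlam ht
  set r := fun j => (t j).1 with hr
  set c := fun j => (t j).2 with hc
  have hrd : ∀ j, r j < d := by
    intro j
    by_contra hj
    have h1 := hrow (r j)
    rw [hd _ (by omega), Finset.card_eq_zero] at h1
    have : j ∈ (∅ : Finset (Fin k)) := by
      rw [← h1]; simp [hr]
    simp at this
  let R : Fin k → Fin d := fun j => ⟨r j, hrd j⟩
  have hwR : ∀ i, wt R i = lam i := by
    intro i
    rw [← hrow]
    unfold wt
    congr 1
    ext j
    simp [R, Fin.ext_iff, hr]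
  have hWinv : ∀ σ : Perm (Fin d), ∀ (f : Fin k → Fin d) (h : Perm (Fin k)),
      (∀ i, wt f i + dl (σ i) = lam i + dl i) →
      (∀ i, wt (f ∘ h) i + dl (σ i) = lam i + dl i) := by
    intro σ f h H i
    rw [wt_comp, H]
  have h1 : ∀ π : Perm (Fin k), (∑ h : Perm (Fin k), yE r c (h⁻¹ * π⁻¹ * h)) *
      psi (fun i : Fin d => lam i + dl i) π = ∑ σ : Perm (Fin d), (sign σ : ℤ) *
      ((∑ h : Perm (Fin k), yE r c (h⁻¹ * π⁻¹ * h)) * ∑ f : Fin k → Fin d,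
        if (∀ i, wt f i + dl (σ i) = lam i + dl i) ∧ f ∘ π = f then (1 : ℤ) else 0) := by
    intro π
    unfold psi
    rw [Finset.mul_sum]
    refine Finset.sum_congr rfl fun σ _ => ?_
    rw [mul_left_comm]
  rw [Finset.sum_congr rfl fun π _ => h1 π, Finset.sum_comm]
  simp only [← Finset.mul_sum]
  have h2 : ∀ σ : Perm (Fin d), ∑ π : Perm (Fin k),
      (∑ h : Perm (Fin k), yE r c (h⁻¹ * π⁻¹ * h)) * (∑ f : Fin k → Fin d,
        if (∀ i, wt f i + dl (σ i) = lam i + dl i) ∧ f ∘ π = f then (1 : ℤ) else 0) =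
      (k ! : ℤ) * stabSum d r c (fun f => ∀ i, wt f i + dl (σ i) = lam i + dl i) := by
    intro σ
    exact pair_stab r c (fun f => ∀ i, wt f i + dl (σ i) = lam i + dl i) (hWinv σ)
  simp only [h2]
  rw [Fintype.sum_eq_single 1]
  · rw [stabSum_self hT _ R (fun _ => rfl) (hWinv 1)]
    · simp
    · intro i; simp [hwR]
    · intro f hf m
      rw [card_lt_wt]
      have : (univ.filter (fun j => r j < m)).card = _ := card_lt_wt R m
      rw [this]
      refine Finset.sum_congr rfl fun i _ => ?_
      have := hf i
      simp only [Perm.one_apply] at this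
      rw [hwR]; omega
  · intro σ hσ
    rw [stabSum_zero _ _ _ (hWinv σ), mul_zero, mul_zero]
    intro f hf hcol
    apply hσ
    have key : ∀ n : ℕ, ∀ i : Fin d, (i : ℕ) = n → σ i = i := by
      intro n
      induction n using Nat.strong_induction_on with
      | _ n ih =>
        intro i hi
        by_contra hne
        have hgt : (i : ℕ) < σ i := by
          by_contra hlt
          have hlt' : (σ i : ℕ) < n := by
            have : (σ i : ℕ) ≠ i := fun h => hne (Fin.ext h)
            omega
          exact hne (σ.injective (ih _ hlt' (σ i) rfl))
        have hdom := dominance hT hcol (n + 1)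
        have e2 : (univ.filter (fun j => r j < n + 1)).card = _ := card_lt_wt R (n + 1)
        rw [card_lt_wt, e2] at hdom
        refine absurd hdom (not_le.2 ?_)
        refine Finset.sum_lt_sum ?_ ⟨i, by simp [hi], ?_⟩
        · intro i' hi'
          simp only [mem_filter, mem_univ, true_and] at hi'
          have := hf i'
          rw [hwR]
          by_cases h : (i' : ℕ) < n
          · rw [ih _ h i' rfl] at this; omega
          · have : i' = i := Fin.ext (by omega)
            subst this
            unfold dl at *
            omega
        · have := hf i
          rw [hwR]
          unfold dl at this
          have := (σ i).2
          omega
    ext i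
    rw [key _ i rfl]; rfl

end Psi
section ChiNorm
open Equiv Equiv.Perm

/-- The unnormalised character. -/
def chS {k : ℕ} (r c : Fin k → ℕ) (π : Perm (Fin k)) : ℤ :=
  ∑ h : Perm (Fin k), yE r c (h⁻¹ * π⁻¹ * h)

lemma chS_conj {k : ℕ} (r c : Fin k → ℕ) (π u : Perm (Fin k)) :
    chS r c (u * π * u⁻¹) = chS r c π := by
  unfold chS
  refine Fintype.sum_equiv (Equiv.mulLeft u⁻¹) _ _ fun h => ?_
  have e : h⁻¹ * (u * π * u⁻¹)⁻¹ * h = (u⁻¹ * h)⁻¹ * π⁻¹ * (u⁻¹ * h) := by group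
  rw [e]
  rfl

lemma chS_inv {k : ℕ} (r c : Fin k → ℕ) (π : Perm (Fin k)) : chS r c π⁻¹ = chS r c π := by
  have h : IsConj π π⁻¹ := by
    rw [Equiv.Perm.isConj_iff_cycleType_eq, Equiv.Perm.cycleType_inv]
  obtain ⟨u, hu⟩ := isConj_iff.1 h
  rw [← hu, chS_conj]

lemma chS_norm {k : ℕ} {r c : Fin k → ℕ} (hT : IsTab r c) :
    ∑ π, chS r c π ^ 2 = (k ! : ℤ) * yN r c ^ 2 := by
  have h0 : ∑ v : Perm (Fin k), ∑ g, yE r c g * yE r c (v⁻¹ * g⁻¹ * v) = yN r c ^ 2 := by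
    exact_mod_cast yE_norm hT
  have h1 : ∀ π, chS r c π ^ 2 = ∑ h : Perm (Fin k), yE r c (h⁻¹ * π * h) * chS r c π := by
    intro π
    have e : chS r c π = ∑ h : Perm (Fin k), yE r c (h⁻¹ * π * h) := by
      rw [← chS_inv, chS, inv_inv]
    rw [sq, ← Finset.sum_mul, ← e]
  simp only [h1]
  rw [Finset.sum_comm]
  have h2 : ∀ h : Perm (Fin k), ∑ π, yE r c (h⁻¹ * π * h) * chS r c π = yN r c ^ 2 := by
    intro h
    rw [← h0, Finset.sum_comm]
    refine Fintype.sum_equiv (MulAut.conj h⁻¹).toEquiv _ _ fun π => ?_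
    have e1 : (MulAut.conj h⁻¹).toEquiv π = h⁻¹ * π * h := by simp
    rw [e1, ← Finset.mul_sum]
    congr 1
    have := chS_conj r c π h⁻¹
    rw [inv_inv] at this
    rw [← this, chS]
  simp only [h2]
  simp [Fintype.card_perm]

lemma chS_eq {k d : ℕ} {lam : ℕ → ℕ} (hlam : IsPartitionOf k lam) (hd : ∀ i, d ≤ i → lam i = 0)
    {t : Fin k → ℕ × ℕ} (ht : Set.BijOn t Set.univ ↑(youngCells k lam))
    (hpsi : ∑ π : Perm (Fin k), psi (fun i : Fin d => lam i + dl i) π ^ 2 = (k ! : ℤ))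
    (π : Perm (Fin k)) : youngIdealChar k t π = (psi (fun i : Fin d => lam i + dl i) π : ℂ) := by
  have hT := isTab_of_bijOn hlam ht
  have hp := psi_pair hlam hd ht
  have hn := chS_norm hT
  have hN := yN_ne_zero hT
  rw [youngIdealChar_eq t hT]
  set r := fun j => (t j).1 with hr
  set c := fun j => (t j).2 with hc
  set ps := fun π : Perm (Fin k) => psi (fun i : Fin d => lam i + dl i) π with hps
  have hp' : ∑ π : Perm (Fin k), chS r c π * ps π = (k ! : ℤ) * yN r c := hp
  have hz : ∑ π : Perm (Fin k), (yN r c * ps π - chS r c π) ^ 2 = 0 := by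
    have e : ∀ π : Perm (Fin k), (yN r c * ps π - chS r c π) ^ 2 =
        yN r c ^ 2 * ps π ^ 2 - 2 * yN r c * (chS r c π * ps π) + chS r c π ^ 2 := by
      intro π; ring
    simp only [e, Finset.sum_add_distrib, Finset.sum_sub_distrib, ← Finset.mul_sum]
    rw [hp', hn, hpsi]
    ring
  rw [Finset.sum_eq_zero_iff_of_nonneg (fun _ _ => sq_nonneg _)] at hz
  have h1 := hz π (Finset.mem_univ _)
  rw [sq_eq_zero_iff, sub_eq_zero] at h1
  have h2 : (∑ h : Perm (Fin k), (yE r c (h⁻¹ * π⁻¹ * h) : ℂ)) = ((chS r c π : ℤ) : ℂ) := by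
    rw [chS]; push_cast; rfl
  rw [h2, ← h1]
  push_cast
  rw [inv_mul_cancel_left₀ hN]

end ChiNorm
section Expand
open Equiv Equiv.Perm

/-- The power-sum polynomial as a sum over functions constant on the cycles. -/
def pF {k d : ℕ} {R : Type*} [CommRing R] (π : Perm (Fin k)) (x : Fin d → R) : R :=
  ∑ f ∈ univ.filter (fun f : Fin k → Fin d => f ∘ π = f), ∏ j, x (f j)

/-- The alternant. -/
def alt {d : ℕ} {R : Type*} [CommRing R] (x : Fin d → R) (β : Fin d → ℕ) : R :=
  (Matrix.of fun i j : Fin d => x i ^ β j).det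

lemma alt_eq {d : ℕ} {R : Type*} [CommRing R] (x : Fin d → R) (β : Fin d → ℕ) :
    alt x β = ∑ σ : Perm (Fin d), ((sign σ : ℤ) : R) * ∏ i, x i ^ β (σ i) := by
  unfold alt
  rw [← Matrix.det_transpose, Matrix.det_apply']
  rfl

lemma prod_wt {k d : ℕ} {R : Type*} [CommRing R] (x : Fin d → R) (f : Fin k → Fin d) :
    ∏ j, x (f j) = ∏ i, x i ^ wt f i := by
  rw [← Finset.prod_fiberwise univ f]
  refine Finset.prod_congr rfl fun i _ => ?_
  unfold wt
  rw [← Finset.prod_const]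
  refine Finset.prod_congr rfl fun j hj => ?_
  simp only [mem_filter, mem_univ, true_and] at hj
  rw [hj]

lemma sum_wt {k d : ℕ} (f : Fin k → Fin d) : ∑ i, wt f i = k := by
  have := Finset.card_eq_sum_card_fiberwise (f := f) (s := univ) (t := univ)
    (fun _ _ => by simp)
  rw [Finset.card_univ, Fintype.card_fin] at this
  exact this.symm

lemma expand {k d : ℕ} {R : Type*} [CommRing R] (π : Perm (Fin k)) (x : Fin d → R) :
    pF π x * alt x dl = ∑ α ∈ piAntidiag univ (k + ∑ i : Fin d, dl i),
      ((psi α π : ℤ) : R) * ∏ i, x i ^ α i := by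
  rw [alt_eq, pF, Finset.mul_sum]
  have h1 : ∀ α : Fin d → ℕ, ((psi α π : ℤ) : R) * ∏ i, x i ^ α i =
      ∑ σ : Perm (Fin d), ∑ f : Fin k → Fin d,
        if (fun i => wt f i + dl (σ i)) = α then
          (if f ∘ π = f then ((sign σ : ℤ) : R) * ∏ i, x i ^ α i else 0) else 0 := by
    intro α
    unfold psi
    push_cast
    rw [Finset.sum_mul]
    refine Finset.sum_congr rfl fun σ _ => ?_
    rw [mul_assoc, Finset.sum_mul, Finset.mul_sum]
    refine Finset.sum_congr rfl fun f _ => ?_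
    simp only [funext_iff (g := α)]
    split_ifs <;> simp_all
  simp only [h1]
  rw [Finset.sum_comm]
  refine Finset.sum_congr rfl fun σ _ => ?_
  rw [Finset.sum_comm, Finset.sum_mul, Finset.sum_filter]
  refine Finset.sum_congr rfl fun f _ => ?_
  rw [Finset.sum_ite_eq]
  rw [if_pos (c := _ ∈ piAntidiag _ _)]
  · split_ifs
    · simp only [pow_add, Finset.prod_mul_distrib]
      rw [prod_wt]; ring
    · rfl
  · rw [mem_piAntidiag]
    refine ⟨?_, fun _ _ => Finset.mem_univ _⟩
    rw [Finset.sum_add_distrib, sum_wt, Equiv.sum_comp σ dl]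

lemma wt_perm {k d : ℕ} (f : Fin k → Fin d) (ρ : Perm (Fin d)) (i : Fin d) :
    wt (ρ ∘ f) (ρ i) = wt f i := by
  unfold wt
  simp

lemma psi_alt {k d : ℕ} (α : Fin d → ℕ) (π : Perm (Fin k)) (ρ : Perm (Fin d)) :
    psi (α ∘ ρ) π = (sign ρ : ℤ) * psi α π := by
  unfold psi
  rw [Finset.mul_sum]
  refine Fintype.sum_equiv (Equiv.mulRight ρ⁻¹) _ _ fun σ => ?_
  rw [← mul_assoc]
  congr 1
  · simp only [Equiv.coe_mulRight, Perm.sign_mul, Perm.sign_inv]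
    rcases Int.units_eq_one_or (sign ρ) with h | h <;> simp [h]
  · refine Fintype.sum_equiv (Equiv.piCongrRight fun _ => ρ) _ _ fun f => ?_
    have e : (Equiv.piCongrRight fun _ => ρ) f = ρ ∘ f := rfl
    rw [e]
    have e1 : (∀ i, wt f i + dl (σ i) = (α ∘ ρ) i) ↔
        ∀ i, wt (ρ ∘ f) i + dl ((Equiv.mulRight ρ⁻¹ σ) i) = α i := by
      rw [← ρ.forall_congr_right (q := fun i => wt (ρ ∘ f) i + dl ((Equiv.mulRight ρ⁻¹ σ) i) = α i)]
      refine forall_congr' fun i => ?_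
      rw [wt_perm]
      simp
    have e2 : f ∘ π = f ↔ (ρ ∘ f) ∘ π = ρ ∘ f := by
      rw [Function.comp_assoc]
      exact (ρ.injective.comp_left.eq_iff).symm
    simp only [e1, ← e2]

lemma psi_zero {k d : ℕ} (α : Fin d → ℕ) (π : Perm (Fin k)) (h : ¬ Function.Injective α) :
    psi α π = 0 := by
  unfold Function.Injective at h
  push Not at h
  obtain ⟨i, j, h1, h2⟩ := h
  have h3 : α ∘ (swap i j) = α := by
    funext l
    simp only [Function.comp_apply]
    by_cases hi : l = i
    · subst hi; simp [h1]
    · by_cases hj : l = j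
      · subst hj; simp [h1]
      · rw [swap_apply_of_ne_of_ne hi hj]
  have h4 := psi_alt α π (swap i j)
  rw [h3, sign_swap h2] at h4
  simp at h4
  omega

/-- Partitions of `k` with at most `d` parts. -/
def partL (d k : ℕ) : Finset (Fin d → Fin (k + 1)) := by
  classical
  exact Finset.univ.filter (fun lam : Fin d → Fin (k + 1) =>
          Antitone (fun i => (lam i : ℕ)) ∧ (∑ i, (lam i : ℕ)) = k)

lemma mem_partL {d k : ℕ} (lam : Fin d → Fin (k + 1)) : lam ∈ partL d k ↔
    Antitone (fun i => (lam i : ℕ)) ∧ (∑ i, (lam i : ℕ)) = k := by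
  simp [partL]

lemma strictAnti_gap {d : ℕ} {β : Fin d → ℕ} (hβ : StrictAnti β) (n : ℕ) :
    ∀ i j : Fin d, (j : ℕ) = i + n → β j + n ≤ β i := by
  induction n with
  | zero => intro i j h; rw [Fin.ext h]; simp
  | succ n ih =>
    intro i j h
    have h1 := j.2
    have h2 := ih i ⟨i + n, by omega⟩ rfl
    have h3 : β j < β ⟨i + n, by omega⟩ := hβ (by rw [Fin.lt_def]; simp; omega)
    omega

lemma strictAnti_dl {d k : ℕ} {lam : Fin d → Fin (k + 1)} (h : Antitone (fun i => (lam i : ℕ))) :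
    StrictAnti (fun i => (lam i : ℕ) + dl i) := by
  intro i j hij
  have h1 : (lam j : ℕ) ≤ lam i := h hij.le
  have : (i : ℕ) < j := hij
  have := j.2
  simp only [dl]
  omega

lemma sort_alt {k d : ℕ} {R : Type*} [CommRing R] (π : Perm (Fin k)) (x : Fin d → R) :
    ∑ α ∈ piAntidiag univ (k + ∑ i : Fin d, dl i), ((psi α π : ℤ) : R) * ∏ i, x i ^ α i =
    ∑ lam ∈ partL d k, ((psi (fun i => (lam i : ℕ) + dl i) π : ℤ) : R) *
      alt x (fun i => (lam i : ℕ) + dl i) := by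
  classical
  have h1 : ∀ lam : Fin d → Fin (k + 1), ((psi (fun i => (lam i : ℕ) + dl i) π : ℤ) : R) *
      alt x (fun i => (lam i : ℕ) + dl i) = ∑ ρ : Perm (Fin d),
        ((psi ((fun i => (lam i : ℕ) + dl i) ∘ ρ) π : ℤ) : R) *
          ∏ i, x i ^ ((fun i => (lam i : ℕ) + dl i) ∘ ρ) i := by
    intro lam
    rw [alt_eq, Finset.mul_sum]
    refine Finset.sum_congr rfl fun ρ _ => ?_
    rw [psi_alt]
    push_cast
    simp only [Function.comp_apply]
    ring
  rw [Finset.sum_congr rfl fun lam _ => h1 lam, ← Finset.sum_product']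
  rw [← Finset.sum_filter_add_sum_filter_not _ Function.Injective, Finset.sum_eq_zero
    (s := (piAntidiag univ (k + ∑ i : Fin d, dl i)).filter fun α => ¬ Function.Injective α),
    add_zero]
  · symm
    refine Finset.sum_bij (fun p _ => (fun i => (p.1 i : ℕ) + dl i) ∘ p.2) ?_ ?_ ?_ ?_
    · rintro ⟨lam, ρ⟩ h
      simp only [mem_product, mem_univ, and_true, mem_partL] at h
      rw [mem_filter, mem_piAntidiag]
      refine ⟨⟨?_, fun _ _ => Finset.mem_univ _⟩, (strictAnti_dl h.1).injective.comp ρ.injective⟩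
      have := Equiv.sum_comp ρ (fun i => (lam i : ℕ) + dl i)
      simp only [Function.comp_apply]
      rw [this, Finset.sum_add_distrib, h.2]
    · rintro ⟨lam, ρ⟩ h ⟨lam', ρ'⟩ h' heq
      simp only [mem_product, mem_univ, and_true, mem_partL] at h h'
      have e1 : Set.range (fun i => (lam i : ℕ) + dl i) = Set.range (fun i => (lam' i : ℕ) + dl i) := by
        have := congrArg Set.range heq
        rwa [ρ.surjective.range_comp, ρ'.surjective.range_comp] at this
      have e2 := ((strictAnti_dl h.1).range_inj (strictAnti_dl h'.1)).1 e1
      have e3 : lam = lam' := by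
        funext i
        have : (lam i : ℕ) + dl i = lam' i + dl i := congrFun e2 i
        exact Fin.ext (by omega)
      subst e3
      congr 1
      ext i
      have := (strictAnti_dl h.1).injective (congrFun heq i)
      rw [this]
    · intro α hα
      rw [mem_filter, mem_piAntidiag] at hα
      obtain ⟨⟨hsum, -⟩, hinj⟩ := hα
      let ρ : Perm (Fin d) := Fin.revPerm.trans (Tuple.sort α)
      have hβ : StrictAnti (α ∘ ρ) := by
        have h2 : StrictMono (α ∘ Tuple.sort α) :=
          (Tuple.monotone_sort α).strictMono_of_injective
            (hinj.comp (Tuple.sort α).injective)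
        intro i j hij
        exact h2 (Fin.rev_lt_rev.2 hij)
      have hge : ∀ i, dl i ≤ (α ∘ ρ) i := by
        intro i
        have hi := i.2
        have := strictAnti_gap hβ (dl i) i ⟨d - 1, by omega⟩ (by simp [dl]; omega)
        omega
      have hsum2 : ∑ i, ((α ∘ ρ) i - dl i) = k := by
        have e1 : ∑ i, (α ∘ ρ) i = ∑ i, α i := Equiv.sum_comp ρ α
        have hsum' : ∑ i, α i = k + ∑ i : Fin d, dl i := hsum
        have e2 : ∑ i, (α ∘ ρ) i = ∑ i, ((α ∘ ρ) i - dl i) + ∑ i : Fin d, dl i := by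
          rw [← Finset.sum_add_distrib]
          refine Finset.sum_congr rfl fun i _ => ?_
          have := hge i
          omega
        omega
      have hle : ∀ i, (α ∘ ρ) i - dl i ≤ k := by
        intro i
        rw [← hsum2]
        exact Finset.single_le_sum (f := fun i => (α ∘ ρ) i - dl i)
          (fun _ _ => Nat.zero_le _) (Finset.mem_univ i)
      refine ⟨⟨fun i => ⟨(α ∘ ρ) i - dl i, by have := hle i; omega⟩, ρ⁻¹⟩, ?_, ?_⟩
      · simp only [mem_product, mem_univ, and_true, mem_partL]
        refine ⟨?_, hsum2⟩
        intro i j hij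
        have hij' : (i : ℕ) ≤ j := hij
        have := strictAnti_gap hβ (j - i) i j (by omega)
        have h1 := hge i
        have h2 := hge j
        have := j.2
        simp only [dl] at *
        omega
      · funext i
        have := hge (ρ⁻¹ i)
        simp only [Function.comp_apply] at this ⊢
        rw [Nat.sub_add_cancel this]
        simp
    · rintro ⟨lam, ρ⟩ _; rfl
  · intro α hα
    rw [mem_filter] at hα
    rw [psi_zero α π hα.2]
    simp

end Expand
section Cauchy
open Equiv Equiv.Perm

lemma alt_dl_eq {d : ℕ} {R : Type*} [CommRing R] (x : Fin d → R) :
    alt x dl = ∏ i : Fin d, ∏ j ∈ Finset.Ioi i, (x i - x j) := by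
  have h : (Matrix.projVandermonde (fun _ => (1 : R)) x).det = alt x dl := by
    unfold alt
    congr 1
    ext i j
    rw [Matrix.projVandermonde_apply, Matrix.of_apply, one_pow, one_mul, Fin.val_rev]
    congr 1
    unfold dl
    omega
  rw [← h, Matrix.det_projVandermonde]
  simp

/-- Signed elementary symmetric polynomials in the variables other than `y j`. -/
def eMat {d : ℕ} {R : Type*} [CommRing R] (y : Fin d → R) : Matrix (Fin d) (Fin d) R :=
  Matrix.of fun m j => ∑ u ∈ powersetCard (m : ℕ) (univ.erase j), ∏ l ∈ u, (-y l)

lemma proj_mul_eMat {d : ℕ} {R : Type*} [CommRing R] (v w y : Fin d → R) :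
    Matrix.projVandermonde v w * eMat y =
      Matrix.of fun i j => ∏ l ∈ univ.erase j, (w i - v i * y l) := by
  ext i j
  have hd : 0 < d := j.pos
  have hc : (univ.erase j).card = d - 1 := by simp
  rw [Matrix.mul_apply, Matrix.of_apply]
  have h1 : ∀ l, w i - v i * y l = v i * (-y l) + w i := by intro l; ring
  simp only [h1]
  rw [Finset.prod_add, Finset.sum_powerset, hc, Nat.sub_add_cancel hd, Finset.sum_range]
  refine Finset.sum_congr rfl fun m _ => ?_
  rw [Matrix.projVandermonde_apply, eMat, Matrix.of_apply, Finset.mul_sum]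
  refine Finset.sum_congr rfl fun u hu => ?_
  rw [mem_powersetCard] at hu
  rw [Finset.prod_mul_distrib, Finset.prod_const, Finset.prod_const,
    Finset.card_sdiff_of_subset hu.1, hc, hu.2, Fin.val_rev]
  have : d - (m + 1) = d - 1 - (m : ℕ) := by omega
  rw [this]
  ring

/-- The reversal sign. -/
def sgE (d : ℕ) (R : Type*) [CommRing R] : R := ∏ i : Fin d, ∏ _j ∈ Finset.Ioi i, (-1 : R)

lemma sgE_sq (d : ℕ) (R : Type*) [CommRing R] : sgE d R * sgE d R = 1 := by
  unfold sgE
  rw [← Finset.prod_mul_distrib]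
  refine Finset.prod_eq_one fun i _ => ?_
  rw [← Finset.prod_mul_distrib]
  refine Finset.prod_eq_one fun j _ => ?_
  ring

lemma rev_prod {d : ℕ} {R : Type*} [CommRing R] (x : Fin d → R) :
    ∏ i : Fin d, ∏ j ∈ Finset.Ioi i, (x j - x i) =
      sgE d R * ∏ i : Fin d, ∏ j ∈ Finset.Ioi i, (x i - x j) := by
  unfold sgE
  rw [← Finset.prod_mul_distrib]
  refine Finset.prod_congr rfl fun i _ => ?_
  rw [← Finset.prod_mul_distrib]
  refine Finset.prod_congr rfl fun j _ => ?_
  ring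

lemma diag_prod {d : ℕ} {R : Type*} [CommRing R] (y : Fin d → R) :
    ∏ i, ∏ l ∈ univ.erase i, (y i - y l) = alt y dl * (sgE d R * alt y dl) := by
  rw [alt_dl_eq, ← rev_prod]
  have h1 : ∀ i : Fin d, ∏ l ∈ univ.erase i, (y i - y l) =
      (∏ l ∈ Finset.Ioi i, (y i - y l)) * ∏ l ∈ Finset.Iio i, (y i - y l) := by
    intro i
    rw [← Finset.prod_union]
    · refine Finset.prod_congr ?_ fun _ _ => rfl
      ext l
      simp only [mem_erase, mem_univ, and_true, mem_union, mem_Ioi, mem_Iio]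
      constructor
      · intro h; exact (lt_or_gt_of_ne h).symm
      · rintro (h | h)
        · exact h.ne'
        · exact h.ne
    · rw [Finset.disjoint_left]
      intro l h1 h2
      rw [mem_Ioi] at h1
      rw [mem_Iio] at h2
      exact lt_asymm h1 h2
  simp only [h1, Finset.prod_mul_distrib]
  congr 1
  refine Finset.prod_comm' ?_
  intro a b
  simp

lemma cauchy_poly {d : ℕ} {R : Type*} [CommRing R] [IsDomain R] (z y : Fin d → R)
    (hy : Function.Injective y) :
    (Matrix.of fun i j : Fin d => ∏ l ∈ univ.erase j, (1 - z i * y l)).det =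
      alt z dl * alt y dl := by
  have h1 := proj_mul_eMat z (fun _ => 1) y
  rw [← h1, Matrix.det_mul, Matrix.det_projVandermonde]
  have h2 := proj_mul_eMat (fun _ => 1) y y
  have h3 : (Matrix.of fun i j : Fin d => ∏ l ∈ univ.erase j, (y i - 1 * y l)) =
      Matrix.diagonal fun i => ∏ l ∈ univ.erase i, (y i - y l) := by
    ext i j
    rw [Matrix.of_apply]
    by_cases h : i = j
    · subst h; simp
    · rw [Matrix.diagonal_apply_ne _ h]
      exact Finset.prod_eq_zero (i := i) (by simp [h]) (by ring)
  have h4 : alt y dl ≠ 0 := by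
    rw [alt_dl_eq, Finset.prod_ne_zero_iff]
    intro i _
    rw [Finset.prod_ne_zero_iff]
    intro j hj
    rw [mem_Ioi] at hj
    exact sub_ne_zero.2 fun h => hj.ne (hy h)
  have h5 : (eMat y).det = sgE d R * alt y dl := by
    have := congrArg Matrix.det h2
    rw [h3, Matrix.det_mul, Matrix.det_diagonal, diag_prod, Matrix.det_projVandermonde] at this
    simp only [one_mul] at this
    rw [← alt_dl_eq] at this
    exact mul_left_cancel₀ h4 this
  rw [h5]
  simp only [mul_one]
  rw [rev_prod, ← alt_dl_eq]
  linear_combination (alt z dl * alt y dl) * sgE_sq d R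

end Cauchy
section Burnside
open Equiv Equiv.Perm

/-- Content of a function with values in a finite type. -/
def cnt {k : ℕ} {P : Type*} [DecidableEq P] (g : Fin k → P) (i : P) : ℕ :=
  (univ.filter (fun j => g j = i)).card

lemma exists_perm_of_cnt {k : ℕ} {P : Type*} [DecidableEq P] (g g0 : Fin k → P)
    (h : cnt g = cnt g0) : ∃ u : Perm (Fin k), g0 ∘ u = g := by
  have e : ∀ i, Nonempty ({j // g j = i} ≃ {j // g0 j = i}) := by
    intro i
    refine ⟨Fintype.equivOfCardEq ?_⟩
    rw [Fintype.card_subtype, Fintype.card_subtype]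
    exact congrFun h i
  let e' := fun i => (e i).some
  refine ⟨Equiv.ofFiberEquiv e', ?_⟩
  funext j
  exact Equiv.ofFiberEquiv_map e' j

lemma exists_cnt {k : ℕ} {P : Type*} [DecidableEq P] [Fintype P] (n : P → ℕ) (hn : ∑ i, n i = k) :
    ∃ g : Fin k → P, cnt g = n := by
  have e : Fin k ≃ (Σ i : P, Fin (n i)) := Fintype.equivOfCardEq (by simp [hn])
  refine ⟨fun j => (e j).1, ?_⟩
  funext i
  unfold cnt
  rw [← Fintype.card_subtype, ← Fintype.card_fin (n i)]
  refine Fintype.card_congr ?_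
  refine (e.subtypeEquiv (q := fun s => s.1 = i) (fun a => Iff.rfl)).trans ?_
  exact Equiv.sigmaSubtype i

lemma stab_count {k : ℕ} {P : Type*} [DecidableEq P] [Fintype P] (n : P → ℕ) (hn : ∑ i, n i = k) :
    ∑ g ∈ univ.filter (fun g : Fin k → P => cnt g = n),
      (univ.filter (fun π : Perm (Fin k) => g ∘ π = g)).card = k ! := by
  obtain ⟨g0, hg0⟩ := exists_cnt n hn
  have h1 : ∀ g ∈ univ.filter (fun g : Fin k → P => cnt g = n),
      (univ.filter (fun π : Perm (Fin k) => g ∘ π = g)).card =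
      (univ.filter (fun u : Perm (Fin k) => g0 ∘ u = g)).card := by
    intro g hg
    rw [mem_filter] at hg
    obtain ⟨u, hu⟩ := exists_perm_of_cnt g g0 (by rw [hg.2, hg0])
    refine Finset.card_bij (fun π _ => u * π) ?_ ?_ ?_
    · intro π hπ
      simp only [mem_filter, mem_univ, true_and] at hπ ⊢
      rw [Perm.coe_mul, ← Function.comp_assoc, hu, hπ]
    · intro a _ b _ h
      exact mul_left_cancel h
    · intro b hb
      simp only [mem_filter, mem_univ, true_and] at hb
      refine ⟨u⁻¹ * b, ?_, by simp⟩
      simp only [mem_filter, mem_univ, true_and]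
      rw [← hu, Function.comp_assoc, ← Perm.coe_mul, mul_inv_cancel_left, hb, hu]
  rw [Finset.sum_congr rfl h1]
  have h2 := Finset.card_eq_sum_card_fiberwise (f := fun u : Perm (Fin k) => g0 ∘ u) (s := univ)
    (t := univ.filter (fun g : Fin k → P => cnt g = n)) (by
      intro u _
      simp only [coe_filter, mem_univ, true_and, Set.mem_ofPred_eq]
      rw [← hg0]
      funext i
      unfold cnt
      refine Finset.card_bij (fun j _ => u j) ?_ ?_ ?_
      · intro j hj; simpa using hj
      · intro a _ b _ hab; exact u.injective hab
      · intro b hb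
        exact ⟨u⁻¹ b, by simpa using hb, by simp⟩)
  rw [← h2, Finset.card_univ, Fintype.card_perm, Fintype.card_fin]

lemma prod_cnt {k : ℕ} {P : Type*} [DecidableEq P] [Fintype P] {R : Type*} [CommRing R]
    (z : P → R) (g : Fin k → P) : ∏ j, z (g j) = ∏ i, z i ^ cnt g i := by
  rw [← Finset.prod_fiberwise univ g]
  refine Finset.prod_congr rfl fun i _ => ?_
  unfold cnt
  rw [← Finset.prod_const]
  refine Finset.prod_congr rfl fun j hj => ?_
  simp only [mem_filter, mem_univ, true_and] at hj
  rw [hj]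

lemma sum_cnt {k : ℕ} {P : Type*} [DecidableEq P] [Fintype P] (g : Fin k → P) :
    ∑ i, cnt g i = k := by
  have := Finset.card_eq_sum_card_fiberwise (f := g) (s := univ) (t := univ)
    (fun _ _ => by simp)
  rw [Finset.card_univ, Fintype.card_fin] at this
  exact this.symm

lemma burnside {k : ℕ} {P : Type*} [DecidableEq P] [Fintype P] {R : Type*} [CommRing R]
    (z : P → R) :
    ∑ π : Perm (Fin k), ∑ g ∈ univ.filter (fun g : Fin k → P => g ∘ π = g), ∏ j, z (g j) =
      (k ! : R) * ∑ n ∈ piAntidiag univ k, ∏ i, z i ^ n i := by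
  have h1 : ∑ π : Perm (Fin k), ∑ g ∈ univ.filter (fun g : Fin k → P => g ∘ π = g), ∏ j, z (g j) =
      ∑ g : Fin k → P, ((univ.filter (fun π : Perm (Fin k) => g ∘ π = g)).card : R) *
        ∏ j, z (g j) := by
    simp only [Finset.sum_filter]
    rw [Finset.sum_comm]
    refine Finset.sum_congr rfl fun g _ => ?_
    rw [← Finset.sum_filter, Finset.sum_const, nsmul_eq_mul]
  rw [h1, ← Finset.sum_fiberwise_of_maps_to (g := cnt) (t := piAntidiag univ k), Finset.mul_sum]
  · refine Finset.sum_congr rfl fun n hn => ?_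
    rw [mem_piAntidiag] at hn
    rw [← stab_count n hn.1]
    push_cast
    rw [Finset.sum_mul]
    refine Finset.sum_congr rfl fun g hg => ?_
    rw [mem_filter] at hg
    rw [prod_cnt, hg.2]
  · intro g _
    rw [mem_piAntidiag]
    exact ⟨sum_cnt g, fun _ _ => Finset.mem_univ _⟩

lemma burnside_pF {k d : ℕ} {R : Type*} [CommRing R] (x y : Fin d → R) :
    ∑ π : Perm (Fin k), pF π x * pF π y =
      (k ! : R) * ∑ n ∈ piAntidiag (univ : Finset (Fin d × Fin d)) k,
        ∏ p, (x p.1 * y p.2) ^ n p := by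
  rw [← burnside (fun p : Fin d × Fin d => x p.1 * y p.2)]
  refine Finset.sum_congr rfl fun π _ => ?_
  unfold pF
  rw [Finset.sum_mul_sum, ← Finset.sum_product']
  refine Finset.sum_bij (fun p _ => fun j => (p.1 j, p.2 j)) ?_ ?_ ?_ ?_
  · rintro ⟨f, g⟩ h
    simp only [mem_product, mem_filter, mem_univ, true_and] at h ⊢
    funext j
    exact Prod.ext (congrFun h.1 j) (congrFun h.2 j)
  · rintro ⟨f, g⟩ _ ⟨f', g'⟩ _ h
    refine Prod.ext ?_ ?_
    · funext j; exact congrArg Prod.fst (congrFun h j)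
    · funext j; exact congrArg Prod.snd (congrFun h j)
  · intro g hg
    simp only [mem_filter, mem_univ, true_and] at hg
    refine ⟨(fun j => (g j).1, fun j => (g j).2), ?_, rfl⟩
    simp only [mem_product, mem_filter, mem_univ, true_and]
    constructor
    · funext j; exact congrArg Prod.fst (congrFun hg j)
    · funext j; exact congrArg Prod.snd (congrFun hg j)
  · rintro ⟨f, g⟩ _
    simp only [Finset.prod_mul_distrib]

end Burnside
section PsiNorm
open Equiv Equiv.Perm

/-- The geometric series. -/
def geo {R : Type*} [CommRing R] (a : R) : PowerSeries R := PowerSeries.mk fun n => a ^ n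

lemma geo_mul {R : Type*} [CommRing R] (a : R) :
    geo a * (1 - PowerSeries.X * PowerSeries.C a) = 1 := by
  rw [mul_sub, mul_one, ← mul_assoc]
  ext n
  rw [map_sub, PowerSeries.coeff_mul_C]
  cases n with
  | zero => simp [geo]
  | succ n =>
    rw [PowerSeries.coeff_succ_mul_X]
    simp [geo, _root_.pow_succ, PowerSeries.coeff_one]

lemma coeff_prod_geo {ι R : Type*} [CommRing R] [DecidableEq ι] [Fintype ι] (a : ι → R) (N : ℕ) :
    PowerSeries.coeff N (∏ i, geo (a i)) = ∑ n ∈ piAntidiag univ N, ∏ i, a i ^ n i := by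
  rw [PowerSeries.coeff_prod]
  refine Finset.sum_bij (fun l _ => (l : ι → ℕ)) ?_ ?_ ?_ ?_
  · intro l hl
    rw [mem_finsuppAntidiag] at hl
    rw [mem_piAntidiag]
    exact ⟨hl.1, fun _ _ => Finset.mem_univ _⟩
  · intro a _ b _ h
    exact DFunLike.coe_injective h
  · intro n hn
    rw [mem_piAntidiag] at hn
    refine ⟨Finsupp.equivFunOnFinite.symm n, ?_, ?_⟩
    · rw [mem_finsuppAntidiag]
      exact ⟨by simpa using hn.1, fun _ _ => Finset.mem_univ _⟩
    · simp
  · intro l _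
    simp [geo]

lemma cauchy_series {d : ℕ} {R : Type*} [CommRing R] [IsDomain R] (x y : Fin d → R)
    (hy : Function.Injective y) :
    (Matrix.of fun i j : Fin d => geo (x i * y j)).det =
      (∏ p : Fin d × Fin d, geo (x p.1 * y p.2)) *
        (PowerSeries.X ^ (∑ i : Fin d, dl i) * PowerSeries.C (alt x dl * alt y dl)) := by
  have h1 : (Matrix.of fun i j : Fin d => geo (x i * y j)) = Matrix.of fun i j =>
      (∏ l, geo (x i * y l)) * (Matrix.of fun i j : Fin d => ∏ l ∈ univ.erase j,
        (1 - (PowerSeries.X * PowerSeries.C (x i)) * PowerSeries.C (y l))) i j := by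
    ext1 i j
    rw [Matrix.of_apply, Matrix.of_apply, Matrix.of_apply,
      ← Finset.mul_prod_erase univ _ (Finset.mem_univ j), mul_assoc, ← Finset.prod_mul_distrib,
      Finset.prod_eq_one, mul_one]
    intro l _
    rw [mul_assoc, ← map_mul, geo_mul]
  rw [h1, Matrix.det_mul_column, cauchy_poly (fun i => PowerSeries.X * PowerSeries.C (x i))
    (fun l => PowerSeries.C (y l)) (PowerSeries.C_injective.comp hy),
    Fintype.prod_prod_type]
  congr 1
  have hx : alt (fun i => PowerSeries.X * PowerSeries.C (x i)) dl =
      PowerSeries.X ^ (∑ i : Fin d, dl i) * PowerSeries.C (alt x dl) := by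
    rw [alt_eq, alt_eq, map_sum, Finset.mul_sum]
    refine Finset.sum_congr rfl fun σ _ => ?_
    simp only [map_mul, map_prod, map_pow, map_intCast, mul_pow, Finset.prod_mul_distrib]
    rw [Finset.prod_pow_eq_pow_sum, Equiv.sum_comp σ dl]
    ring
  have hy' : alt (fun i => PowerSeries.C (y i)) dl = PowerSeries.C (alt y dl) := by
    rw [alt_eq, alt_eq, map_sum]
    refine Finset.sum_congr rfl fun σ _ => ?_
    simp only [map_mul, map_prod, map_pow, map_intCast]
  rw [hx, hy', map_mul]
  ring

lemma cauchy_main {k d : ℕ} {R : Type*} [CommRing R] [IsDomain R] (x y : Fin d → R)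
    (hy : Function.Injective y) :
    ∑ π : Perm (Fin k), (pF π x * alt x dl) * (pF π y * alt y dl) =
      (k ! : R) * ∑ σ : Perm (Fin d), ((sign σ : ℤ) : R) *
        ∑ n ∈ piAntidiag univ (k + ∑ i : Fin d, dl i), ∏ i, (x i * y (σ i)) ^ n i := by
  have h1 := congrArg (PowerSeries.coeff (k + ∑ i : Fin d, dl i)) (cauchy_series x y hy)
  rw [mul_left_comm, PowerSeries.coeff_X_pow_mul, PowerSeries.coeff_mul_C, coeff_prod_geo,
    ← Matrix.det_transpose, Matrix.det_apply', map_sum] at h1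
  have h2 : ∀ σ : Perm (Fin d), PowerSeries.coeff (k + ∑ i : Fin d, dl i)
      (((sign σ : ℤ) : PowerSeries R) *
        ∏ i, (Matrix.of fun i j : Fin d => geo (x i * y j)).transpose (σ i) i) =
      ((sign σ : ℤ) : R) * ∑ n ∈ piAntidiag univ (k + ∑ i : Fin d, dl i),
        ∏ i, (x i * y (σ i)) ^ n i := by
    intro σ
    rw [← coeff_prod_geo (fun i => x i * y (σ i)),
      ← map_intCast (PowerSeries.C (R := R)), PowerSeries.coeff_C_mul]
    rfl
  rw [Finset.sum_congr rfl fun σ _ => h2 σ] at h1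
  rw [h1, ← mul_assoc, ← burnside_pF, Finset.sum_mul]
  refine Finset.sum_congr rfl fun π _ => ?_
  ring

/-- Exponent vectors in the two sets of variables. -/
def mon {d : ℕ} (α β : Fin d → ℕ) : (Fin d ⊕ Fin d) →₀ ℕ :=
  Finsupp.equivFunOnFinite.symm (Sum.elim α β)

lemma mon_inj {d : ℕ} {α β α' β' : Fin d → ℕ} : mon α β = mon α' β' ↔ α = α' ∧ β = β' := by
  unfold mon
  rw [Finsupp.equivFunOnFinite.symm.injective.eq_iff]
  constructor
  · intro h
    constructor
    · funext i; exact congrFun h (Sum.inl i)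
    · funext i; exact congrFun h (Sum.inr i)
  · rintro ⟨rfl, rfl⟩; rfl

lemma mon_prod {d : ℕ} (α β : Fin d → ℕ) :
    (∏ i, (MvPolynomial.X (Sum.inl i) : MvPolynomial (Fin d ⊕ Fin d) ℤ) ^ α i) *
      ∏ i, (MvPolynomial.X (Sum.inr i) : MvPolynomial (Fin d ⊕ Fin d) ℤ) ^ β i =
      MvPolynomial.monomial (mon α β) 1 := by
  rw [MvPolynomial.monomial_eq, Finsupp.prod_fintype _ _ (by simp), Fintype.prod_sum_type]
  simp [mon]

lemma psi_norm {k d : ℕ} (α : Fin d → ℕ) (hα : Function.Injective α)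
    (hsum : ∑ i, α i = k + ∑ i : Fin d, dl i) :
    ∑ π : Perm (Fin k), psi α π ^ 2 = (k ! : ℤ) := by
  set N := k + ∑ i : Fin d, dl i with hN
  let x : Fin d → MvPolynomial (Fin d ⊕ Fin d) ℤ := fun i => MvPolynomial.X (Sum.inl i)
  let y : Fin d → MvPolynomial (Fin d ⊕ Fin d) ℤ := fun i => MvPolynomial.X (Sum.inr i)
  have hy : Function.Injective y := fun i j h => Sum.inr_injective (MvPolynomial.X_injective h)
  have hmem : α ∈ piAntidiag (univ : Finset (Fin d)) N :=
    mem_piAntidiag.2 ⟨hsum, fun _ _ => Finset.mem_univ _⟩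
  have h1 := congrArg (MvPolynomial.coeff (mon α α)) (cauchy_main (k := k) x y hy)
  have hL : ∀ π : Perm (Fin k), MvPolynomial.coeff (mon α α)
      ((pF π x * alt x dl) * (pF π y * alt y dl)) = psi α π ^ 2 := by
    intro π
    rw [expand, expand, Finset.sum_mul_sum, MvPolynomial.coeff_sum]
    have e : ∀ a b : Fin d → ℕ, MvPolynomial.coeff (mon α α)
        ((((psi a π : ℤ) : MvPolynomial (Fin d ⊕ Fin d) ℤ) * ∏ i, x i ^ a i) *
          (((psi b π : ℤ) : MvPolynomial (Fin d ⊕ Fin d) ℤ) * ∏ i, y i ^ b i)) =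
        if α = a then (if α = b then psi a π * psi b π else 0) else 0 := by
      intro a b
      rw [mul_mul_mul_comm, mon_prod, ← Int.cast_mul,
        ← map_intCast (MvPolynomial.C (R := ℤ) (σ := Fin d ⊕ Fin d)), MvPolynomial.coeff_C_mul,
        MvPolynomial.coeff_monomial]
      simp only [mon_inj, eq_comm (b := α)]
      split_ifs <;> simp_all
    simp only [MvPolynomial.coeff_sum, e]
    rw [Finset.sum_eq_single_of_mem α hmem, Finset.sum_eq_single_of_mem α hmem]
    · simp [sq]
    · intro b _ hb; simp [hb.symm]
    · intro b _ hb; simp [hb.symm]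
  have hR : ∀ σ : Perm (Fin d), MvPolynomial.coeff (mon α α)
      (((sign σ : ℤ) : MvPolynomial (Fin d ⊕ Fin d) ℤ) *
        ∑ n ∈ piAntidiag univ N, ∏ i, (x i * y (σ i)) ^ n i) = if σ = 1 then 1 else 0 := by
    intro σ
    rw [← map_intCast (MvPolynomial.C (R := ℤ) (σ := Fin d ⊕ Fin d)), MvPolynomial.coeff_C_mul,
      MvPolynomial.coeff_sum]
    have e : ∀ n : Fin d → ℕ, MvPolynomial.coeff (mon α α) (∏ i, (x i * y (σ i)) ^ n i) =
        if α = n then (if σ = 1 then 1 else 0) else 0 := by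
      intro n
      have e1 : ∏ i, (x i * y (σ i)) ^ n i = MvPolynomial.monomial (mon n (n ∘ σ.symm)) 1 := by
        rw [← mon_prod]
        simp only [mul_pow, Finset.prod_mul_distrib]
        congr 1
        refine Fintype.prod_equiv σ _ _ fun i => ?_
        simp [y]
      rw [e1, MvPolynomial.coeff_monomial]
      simp only [mon_inj]
      by_cases h : α = n
      · subst h
        have : α ∘ σ.symm = α ↔ σ = 1 := by
          constructor
          · intro H
            ext i
            have := hα (congrFun H (σ i))
            simp only [Equiv.symm_apply_apply] at this
            rw [← this]; rfl
          · rintro rfl; rfl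
        simp [this]
      · rw [if_neg (fun H => h H.1.symm), if_neg h]
    simp only [e]
    rw [Finset.sum_ite_eq, if_pos hmem]
    split_ifs with h
    · subst h; simp
    · simp
  rw [MvPolynomial.coeff_sum, Finset.sum_congr rfl fun π _ => hL π] at h1
  rw [h1, ← map_natCast (MvPolynomial.C (R := ℤ) (σ := Fin d ⊕ Fin d)), MvPolynomial.coeff_C_mul,
    MvPolynomial.coeff_sum, Finset.sum_congr rfl fun σ _ => hR σ]
  simp

end PsiNorm
open scoped Classical

/-- Frobenius character formula for Schur–Weyl duality:
`p_τ(x) = Σ_{lam ⊢ k, ℓ(lam) ≤ d} χ_lam(τ) s_lam(x)`, stated after multiplying both sides by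
the Vandermonde determinant `det(x_i^{d−1−j}) = a_δ(x)`, using the bialternant formula
`s_lam(x) = det(x_i^{lam_j + d−1−j}) / a_δ(x)` for the Schur polynomial.  Here `τ` is a
partition of `k` (given as a multiset of non-zero parts), realised as the full cycle type of
a permutation `π ∈ S_k` (Mathlib's `cycleType` omits the fixed points, whence the `filter`). -/
theorem stmt_19 {d k : ℕ} (hk : 0 < k)
    (chi : (k : ℕ) → (ℕ → ℕ) → Equiv.Perm (Fin k) → ℂ) (hchi : IsCharacterFamily chi)
    (x : Fin d → ℂ) (τ : Multiset ℕ) (hτ0 : 0 ∉ τ) (hτsum : τ.sum = k)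
    (π : Equiv.Perm (Fin k)) (hπ : π.cycleType = τ.filter (· ≠ 1)) :
    (τ.map fun r => ∑ i, x i ^ r).prod *
        (Matrix.of fun i j : Fin d => x i ^ (d - 1 - (j : ℕ))).det =
      ∑ lam ∈ Finset.univ.filter (fun lam : Fin d → Fin (k + 1) =>
          Antitone (fun i => (lam i : ℕ)) ∧ (∑ i, (lam i : ℕ)) = k),
        chi k (fun i => if h : i < d then (lam ⟨i, h⟩ : ℕ) else 0) π *
          (Matrix.of fun i j : Fin d => x i ^ ((lam j : ℕ) + (d - 1 - (j : ℕ)))).det := by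
  rw [psum_eq x τ hτ0 hτsum π hπ]
  have h1 := (expand π x).trans (sort_alt π x)
  have h2 : (∑ f ∈ univ.filter (fun f : Fin k → Fin d => f ∘ π = f), ∏ j, x (f j)) *
      (Matrix.of fun i j : Fin d => x i ^ (d - 1 - (j : ℕ))).det = pF π x * alt x dl := by
    unfold pF
    refine congrArg₂ (· * ·) ?_ rfl
    refine Finset.sum_congr ?_ fun _ _ => rfl
    ext f; simp
  have h3 : Finset.univ.filter (fun lam : Fin d → Fin (k + 1) =>
      Antitone (fun i => (lam i : ℕ)) ∧ (∑ i, (lam i : ℕ)) = k) = partL d k := by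
    ext lam
    rw [mem_partL, Finset.mem_filter]
    simp
  refine Eq.trans ?_ (h1.trans ?_)
  · rw [← h2]
  rw [h3]
  refine Finset.sum_congr rfl fun lam hlam => ?_
  rw [mem_partL] at hlam
  refine congrArg₂ (· * ·) ?_ rfl
  set L : ℕ → ℕ := fun i => if h : i < d then (lam ⟨i, h⟩ : ℕ) else 0 with hL
  have hLlam : ∀ i : Fin d, L i = lam i := by
    intro i
    simp [hL]
  have hLd : ∀ i, d ≤ i → L i = 0 := by
    intro i hi
    simp [hL, not_lt.2 hi]
  have hLanti : Antitone L := by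
    intro i j hij
    by_cases hj : j < d
    · have hi : i < d := lt_of_le_of_lt hij hj
      have := hlam.1 (show (⟨i, hi⟩ : Fin d) ≤ ⟨j, hj⟩ from hij)
      simpa [hL, hi, hj] using this
    · rw [hLd j (not_lt.1 hj)]
      exact Nat.zero_le _
  have hLsumd : ∑ i ∈ range d, L i = k := by
    rw [Finset.sum_range, ← hlam.2]
    exact Finset.sum_congr rfl fun i _ => hLlam i
  have hLk : ∀ i, k ≤ i → L i = 0 := by
    intro i hi
    by_contra hne
    have hid : i < d := by
      by_contra hid
      exact hne (hLd i (not_lt.1 hid))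
    have h5 : ∑ _j ∈ range (i + 1), 1 ≤ ∑ j ∈ range (i + 1), L j := by
      refine Finset.sum_le_sum fun j hj => ?_
      rw [Finset.mem_range] at hj
      have : L i ≤ L j := hLanti (by omega)
      omega
    have h6 : ∑ j ∈ range (i + 1), L j ≤ ∑ j ∈ range d, L j :=
      Finset.sum_le_sum_of_subset (Finset.range_subset_range.2 hid)
    rw [hLsumd] at h6
    simp at h5
    omega
  have hLsum : ∑ i ∈ range k, L i = k := by
    have e : ∀ n, (∀ i, n ≤ i → L i = 0) → ∑ i ∈ range (d + k), L i = ∑ i ∈ range n, L i ∨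
        d + k < n := by
      intro n hn
      by_cases h : d + k < n
      · exact Or.inr h
      · left
        symm
        refine Finset.sum_subset (Finset.range_subset_range.2 (by omega)) ?_
        intro i _ hi
        rw [Finset.mem_range] at hi
        exact hn i (by omega)
    rcases e k hLk with h5 | h5
    · rcases e d hLd with h6 | h6
      · rw [← h5, h6, hLsumd]
      · omega
    · omega
  have hP : IsPartitionOf k L := ⟨hLanti, hLk, hLsum⟩
  obtain ⟨t, ht⟩ := exists_tab hP
  have hpsi : (fun i : Fin d => L i + dl i) = fun i => (lam i : ℕ) + dl i := by
    funext i; rw [hLlam]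
  have hnorm := psi_norm (k := k) (fun i : Fin d => L i + dl i)
    (by rw [hpsi]; exact (strictAnti_dl hlam.1).injective)
    (by
      rw [Finset.sum_add_distrib]
      congr 1
      rw [← hLsumd, Finset.sum_range])
  rw [hchi k L hP t ht π, chS_eq hP hLd ht hnorm π, hpsi]

end
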